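/- arXiv:1810.03901 — 2 statements merged into one kernel-verified Lean document; each statement's English description precedes it below -/
import Mathlib

section
/- Let f ∈ ℬ be convenient and Newton nondegenerate with Newton polytope P. If every proper face of P is a simplex (P is simplicial), then gr^𝒩_α(ℬ/ℒ) = 0 for every α ∈ ℚ with α ≥ n; that is, the toric Newton spectrum of f is contained in the interval [0, n). -/
open MvPolynomial

namespace ToricNewton

section
variable {σ : Type*} [Fintype σ] [DecidableEq σ]

/-- Coercion of a lattice point of `ℕ^σ` into `ℝ^σ`. -/
def natToR (v : σ → ℕ) : σ → ℝ := fun i => (v i : ℝ)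

/-- Coercion of an exponent (finitely supported) into `ℝ^σ`. -/
def toR (m : σ →₀ ℕ) : σ → ℝ := fun i => (m i : ℝ)

/-- The Newton polytope of a polynomial: the convex hull of `{0} ∪ supp f`. -/
noncomputable def newtonPolytope (f : MvPolynomial σ ℂ) : Set (σ → ℝ) :=
  convexHull ℝ ({0} ∪ (toR '' (f.support : Set (σ →₀ ℕ))))

/-- The Newton function `ν`, which for a convenient polynomial is the gauge
(Minkowski functional) of the Newton polytope. -/
noncomputable def nu (f : MvPolynomial σ ℂ) (x : σ → ℝ) : ℝ :=
  gauge (newtonPolytope f) x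

/-- `f` is convenient if for each variable `i` some pure power `uᵢ^k`, `k ≥ 1`,
occurs in `f` with nonzero coefficient. -/
def Convenient (f : MvPolynomial σ ℂ) : Prop :=
  ∀ i : σ, ∃ k : ℕ, 1 ≤ k ∧ f.coeff (Finsupp.single i k) ≠ 0

/-- `Δ` is a (nonempty exposed) closed face of `P`. -/
def IsFace (P Δ : Set (σ → ℝ)) : Prop :=
  Δ.Nonempty ∧ ∃ (l : (σ → ℝ) →ₗ[ℝ] ℝ) (c : ℝ),
    (∀ x ∈ P, l x ≤ c) ∧ Δ = {x ∈ P | l x = c}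

/-- A face of the Newton boundary: a closed face of the Newton polytope not
containing the origin. -/
def NBFace (f : MvPolynomial σ ℂ) (Δ : Set (σ → ℝ)) : Prop :=
  IsFace (newtonPolytope f) Δ ∧ (0 : σ → ℝ) ∉ Δ

open Classical in
/-- The truncation `g_Δ` of `g` to the monomials whose exponents lie in `Δ`. -/
noncomputable def faceRestrict (Δ : Set (σ → ℝ)) (g : MvPolynomial σ ℂ) : MvPolynomial σ ℂ :=
  ∑ m ∈ g.support, if toR m ∈ Δ then monomial m (g.coeff m) else 0

/-- `f` is Newton nondegenerate: for every closed face `Δ` of the Newton boundary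
the system `(u₁ ∂f/∂u₁)_Δ = ⋯ = (uₙ ∂f/∂uₙ)_Δ = 0` has no solution in `(ℂ*)ⁿ`. -/
def Nondegenerate (f : MvPolynomial σ ℂ) : Prop :=
  ∀ Δ : Set (σ → ℝ), NBFace f Δ →
    ¬ ∃ x : σ → ℂ, (∀ i, x i ≠ 0) ∧
        ∀ i, eval x (faceRestrict Δ (X i * pderiv i f)) = 0

/-- The ideal `ℒ` generated by the `uᵢ ∂f/∂uᵢ`. -/
noncomputable def LIdeal (f : MvPolynomial σ ℂ) : Ideal (MvPolynomial σ ℂ) :=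
  Ideal.span (Set.range fun i => X i * pderiv i f)

/-- The Jacobian ideal `ℐ` generated by the `∂f/∂uᵢ`. -/
noncomputable def IIdeal (f : MvPolynomial σ ℂ) : Ideal (MvPolynomial σ ℂ) :=
  Ideal.span (Set.range fun i => pderiv i f)

/-- The Newton filtration `𝒩_α ℬ`: the span of the monomials `u^m` with `ν(m) ≤ α`. -/
noncomputable def Nle (f : MvPolynomial σ ℂ) (α : ℝ) : Submodule ℂ (MvPolynomial σ ℂ) where
  carrier := {g | ∀ m ∈ g.support, nu f (toR m) ≤ α}
  zero_mem' := by simp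
  add_mem' := by
    intro a b ha hb m hm
    rcases Finset.mem_union.mp (MvPolynomial.support_add hm) with h | h
    · exact ha m h
    · exact hb m h
  smul_mem' := by
    intro c a ha m hm
    exact ha m (MvPolynomial.support_smul hm)

/-- The filtration `𝒩_{<α} ℬ`. -/
noncomputable def Nlt (f : MvPolynomial σ ℂ) (α : ℝ) : Submodule ℂ (MvPolynomial σ ℂ) where
  carrier := {g | ∀ m ∈ g.support, nu f (toR m) < α}
  zero_mem' := by simp
  add_mem' := by
    intro a b ha hb m hm
    rcases Finset.mem_union.mp (MvPolynomial.support_add hm) with h | h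
    · exact ha m h
    · exact hb m h
  smul_mem' := by
    intro c a ha m hm
    exact ha m (MvPolynomial.support_smul hm)

/-- The twisted filtration `W_α ℬ`: the span of the monomials `u^m` with
`ν(m + (1,…,1)) ≤ α`. -/
noncomputable def Wle (f : MvPolynomial σ ℂ) (α : ℝ) : Submodule ℂ (MvPolynomial σ ℂ) where
  carrier := {g | ∀ m ∈ g.support, nu f (toR m + 1) ≤ α}
  zero_mem' := by simp
  add_mem' := by
    intro a b ha hb m hm
    rcases Finset.mem_union.mp (MvPolynomial.support_add hm) with h | h
    · exact ha m h
    · exact hb m h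
  smul_mem' := by
    intro c a ha m hm
    exact ha m (MvPolynomial.support_smul hm)

/-- The twisted filtration `W_{<α} ℬ`. -/
noncomputable def Wlt (f : MvPolynomial σ ℂ) (α : ℝ) : Submodule ℂ (MvPolynomial σ ℂ) where
  carrier := {g | ∀ m ∈ g.support, nu f (toR m + 1) < α}
  zero_mem' := by simp
  add_mem' := by
    intro a b ha hb m hm
    rcases Finset.mem_union.mp (MvPolynomial.support_add hm) with h | h
    · exact ha m h
    · exact hb m h
  smul_mem' := by
    intro c a ha m hm
    exact ha m (MvPolynomial.support_smul hm)

/-- The graded piece `gr^𝒩_α(ℬ/ℒ) = (𝒩_α ℬ + ℒ)/(𝒩_{<α} ℬ + ℒ)`, realized as the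
image of `𝒩_α ℬ + ℒ` in `ℬ/(𝒩_{<α} ℬ + ℒ)`. -/
noncomputable def grN (f : MvPolynomial σ ℂ) (α : ℝ) :
    Submodule ℂ (MvPolynomial σ ℂ ⧸ (Nlt f α ⊔ (LIdeal f).restrictScalars ℂ)) :=
  Submodule.map (Nlt f α ⊔ (LIdeal f).restrictScalars ℂ).mkQ
    (Nle f α ⊔ (LIdeal f).restrictScalars ℂ)

/-- `dim_ℂ gr^𝒩_α(ℬ/ℒ)`. -/
noncomputable def grDim (f : MvPolynomial σ ℂ) (α : ℝ) : ℕ :=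
  Module.finrank ℂ (grN f α)

/-- The graded piece `gr^W_α(ℬ/ℐ) = (W_α ℬ + ℐ)/(W_{<α} ℬ + ℐ)`. -/
noncomputable def grW (f : MvPolynomial σ ℂ) (α : ℝ) :
    Submodule ℂ (MvPolynomial σ ℂ ⧸ (Wlt f α ⊔ (IIdeal f).restrictScalars ℂ)) :=
  Submodule.map (Wlt f α ⊔ (IIdeal f).restrictScalars ℂ).mkQ
    (Wle f α ⊔ (IIdeal f).restrictScalars ℂ)

/-- `dim_ℂ gr^W_α(ℬ/ℐ)`. -/
noncomputable def grWDim (f : MvPolynomial σ ℂ) (α : ℝ) : ℕ :=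
  Module.finrank ℂ (grW f α)

/-- The dimension of a face, i.e. of the direction of its affine span. -/
noncomputable def faceDim (Δ : Set (σ → ℝ)) : ℕ :=
  Module.finrank ℝ (affineSpan ℝ Δ).direction

/-- `Δ` is a simplex: the convex hull of an affinely independent family. -/
def IsSimplex (Δ : Set (σ → ℝ)) : Prop :=
  ∃ (k : ℕ) (p : Fin (k + 1) → (σ → ℝ)), AffineIndependent ℝ p ∧ Δ = convexHull ℝ (Set.range p)

/-- The union of the coordinate hyperplanes. -/
def coordHyperplanes (σ : Type*) : Set (σ → ℝ) := ⋃ i : σ, {x : σ → ℝ | x i = 0}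

/-- `Box(Δ)`: the set of combinations `Σ q_ℓ b_ℓ`, `q_ℓ ∈ [0,1)`, of the vertices
(extreme points) of `Δ`. -/
def Box (Δ : Set (σ → ℝ)) : Set (σ → ℝ) :=
  {x | ∃ s : Finset (σ → ℝ), ↑s ⊆ Δ.extremePoints ℝ ∧
      ∃ q : (σ → ℝ) → ℝ, (∀ b ∈ s, 0 ≤ q b ∧ q b < 1) ∧ x = ∑ b ∈ s, q b • b}

/-- `Δ ∈ ℱ(P)`: a closed face of the Newton polytope of `f` not contained in the
union of the coordinate hyperplanes. -/
def FcalMem (f : MvPolynomial σ ℂ) (Δ : Set (σ → ℝ)) : Prop :=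
  IsFace (newtonPolytope f) Δ ∧ ¬ Δ ⊆ coordHyperplanes σ

/-- `Box(P)`: the union of `Box(Δ)` over the closed faces of the Newton boundary
not contained in the union of the coordinate hyperplanes. -/
def BoxP (f : MvPolynomial σ ℂ) : Set (σ → ℝ) :=
  ⋃ Δ ∈ {Δ : Set (σ → ℝ) | NBFace f Δ ∧ ¬ Δ ⊆ coordHyperplanes σ}, Box Δ

/-- The cone `ℝ₊·Δ` over `Δ`. -/
def cone0 (Δ : Set (σ → ℝ)) : Set (σ → ℝ) :=
  {x | ∃ t : ℝ, 0 ≤ t ∧ ∃ y ∈ Δ, x = t • y}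

/-- The restriction of `f` obtained by setting the variables in `S` to zero. -/
noncomputable def restrictZero (S : Finset σ) (f : MvPolynomial σ ℂ) :
    MvPolynomial {j : σ // j ∉ S} ℂ :=
  aeval (fun j : σ => if h : j ∉ S then X (⟨j, h⟩ : {j : σ // j ∉ S}) else 0) f

end

end ToricNewton

/-!
Let `F` be a facet with vertices `v`. In the coordinates given by `v`, scaled by a common
denominator `d`, the parts on `F` of the logarithmic derivatives of `f` are `n` forms of degree `d`,
and nondegeneracy says that their only common zero is the origin. By Macaulay's bound every monomial
of degree greater than `n * (d - 1)` lies in the ideal they generate. Hence a monomial `u ^ m` in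
the cone over `F` with `ν m ≥ n` is, modulo `ℒ`, a combination of monomials `u ^ (a + q)` with `q`
in the cone, `ν q = ν m - 1`, and `a` an exponent of `f` below the hyperplane of `F`.

Such a product has `ν (a + q) ≤ ν m`, but equality can occur when `a + q` lies over another facet.
To exclude an infinite loop, fix a generic positive vector `p` and assign to each exponent the facet
whose cone is entered when moving from it in the direction `p`. This cuts out of each cone a
half-open cone by requiring fewer than `n` coordinates to be positive, which costs less than `n` in
degree; the slack between `n * d` and `n * (d - 1)` pays for it, so `q` can be kept in the half-open
cone of `m`. Then `ν (a + q) = ν m` forces the linear function of the new facet to be smaller at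
`p`.
-/

namespace ToricNewton

section GradedRing

open RingTheory.Sequence DirectSum
open scoped Pointwise

variable {A S : Type*} [CommRing A] [SetLike S A] [AddSubgroupClass S A]

theorem isSMulRegular_quotient_of_pow_mem_sup_span {I : Ideal A} {l g : A} {K : ℕ}
    (hl : IsSMulRegular (A ⧸ I) l) (hK : l ^ K ∈ I ⊔ Ideal.span {g}) :
    IsSMulRegular (A ⧸ I) g := by
  rw [isSMulRegular_quotient_iff_mem_of_smul_mem]
  intro x hx
  obtain ⟨a, ha, b, hb, hab⟩ := Submodule.mem_sup.1 hK
  obtain ⟨c, rfl⟩ := Ideal.mem_span_singleton'.1 hb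
  refine mem_of_isSMulRegular_quotient_of_smul_mem (hl.pow K) ?_
  have hsum : l ^ K • x = x * a + c * (g • x) := by
    rw [← hab, smul_eq_mul, smul_eq_mul]
    ring
  exact hsum ▸ add_mem (I.mul_mem_left x ha) (I.mul_mem_left c hx)

theorem isWeaklyRegular_concat_iff {rs : List A} {r : A} :
    IsWeaklyRegular A (rs ++ [r]) ↔
      IsWeaklyRegular A rs ∧ IsSMulRegular (A ⧸ Ideal.ofList rs) r := by
  have htop : (Ideal.ofList rs • ⊤ : Submodule A A) = Ideal.ofList rs := by simp
  rw [isWeaklyRegular_append_iff, isWeaklyRegular_singleton_iff, htop]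

theorem isWeaklyRegular_cons_of_ker_eq {B : Type*} [CommRing B] {π : A →+* B}
    (hπ : Function.Surjective π) {l : A} (hl : IsSMulRegular A l)
    (hker : RingHom.ker π = Ideal.span {l}) {rs : List A}
    (hrs : IsWeaklyRegular B (rs.map π)) : IsWeaklyRegular A (l :: rs) := by
  refine (isWeaklyRegular_cons_iff A l rs).2 ⟨hl, ?_⟩
  have hsmul : (l • ⊤ : Submodule A A) = RingHom.ker π := by
    rw [hker, ← Submodule.ideal_span_singleton_smul, smul_eq_mul, Ideal.mul_top]
  let e : QuotSMulTop l A ≃+ B :=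
    (Submodule.quotEquivOfEq _ _ hsmul).toAddEquiv.trans
      (RingHom.quotientKerEquivOfSurjective hπ).toAddEquiv
  refine (e.isWeaklyRegular_congr (as := rs) (bs := rs.map π) ?_).2 hrs
  refine List.forall₂_map_right_iff.2 (List.forall₂_same.2 fun r _ x ↦ ?_)
  obtain ⟨x, rfl⟩ := Submodule.mkQ_surjective _ x
  exact map_mul π r x

variable (𝒜 : ℕ → S) [GradedRing 𝒜]

/-- Krull's intersection theorem; in the graded setting it needs no finiteness. -/
theorem mem_of_forall_mem_sup_span_pow {I : Ideal A} (hI : I.IsHomogeneous 𝒜) {l : A} {k : ℕ}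
    (hl : l ∈ 𝒜 k) (hk : 0 < k) {x : A} (hx : ∀ N, x ∈ I ⊔ Ideal.span {l ^ N}) : x ∈ I := by
  rw [hI.mem_iff]
  intro i
  obtain ⟨a, ha, b, hb, rfl⟩ := Submodule.mem_sup.1 (hx (i + 1))
  obtain ⟨c, rfl⟩ := Ideal.mem_span_singleton.1 hb
  have hdeg : ¬(i + 1) • k ≤ i := by
    simpa using Nat.lt_of_lt_of_le i.lt_succ_self (Nat.le_mul_of_pos_right _ hk)
  rw [decompose_add, DirectSum.add_apply, AddMemClass.coe_add,
    coe_decompose_mul_of_left_mem_of_not_le 𝒜 (SetLike.pow_mem_graded _ hl) hdeg, add_zero]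
  exact hI i ha

theorem isHomogeneous_ofList {rs : List A} (hrs : ∀ r ∈ rs, ∃ k, 0 < k ∧ r ∈ 𝒜 k) :
    (Ideal.ofList rs).IsHomogeneous 𝒜 :=
  Ideal.homogeneous_span 𝒜 _ fun r hr ↦ (hrs r hr).imp fun _ h ↦ h.2

/-- The `b`-torsion `K` of `A / (rs₀)`, which could obstruct a swap of `a` and `b`, satisfies
`K = aK`, so it lies in all `aᴺ (A / (rs₀))`. -/
theorem isWeaklyRegular_of_perm_of_mem_graded {rs rs' : List A} (h : IsWeaklyRegular A rs)
    (hperm : rs.Perm rs') (hrs : ∀ r ∈ rs, ∃ k, 0 < k ∧ r ∈ 𝒜 k) : IsWeaklyRegular A rs' := by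
  refine h.prototype_perm hperm fun a b rs₀ hsub hK ↦ ?_
  set K := Submodule.torsionBy A (A ⧸ (Ideal.ofList rs₀ • ⊤ : Submodule A A)) b
  obtain ⟨k, hk, ha⟩ := hrs a (hsub.subset List.mem_cons_self)
  have hhom : (Ideal.ofList rs₀ • ⊤ : Ideal A).IsHomogeneous 𝒜 := by
    rw [smul_eq_mul, Ideal.mul_top]
    exact isHomogeneous_ofList 𝒜 fun r hr ↦
      hrs r (hsub.subset (List.mem_cons_of_mem _ (List.mem_cons_of_mem _ hr)))
  have hpow (N : ℕ) : ∀ x ∈ K, ∃ y ∈ K, x = a ^ N • y := by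
    induction N with
    | zero => exact fun x hx ↦ ⟨x, hx, by simp⟩
    | succ N ih =>
      intro x hx
      obtain ⟨y, hy, rfl⟩ := ih x hx
      rw [hK] at hy
      obtain ⟨z, hz, rfl⟩ := hy
      exact ⟨z, hz, by rw [pow_succ, mul_smul]; rfl⟩
  refine (Submodule.eq_bot_iff _).2 fun x hx ↦ ?_
  obtain ⟨x, rfl⟩ := Submodule.mkQ_surjective _ x
  refine (Submodule.Quotient.mk_eq_zero _).2
    (mem_of_forall_mem_sup_span_pow 𝒜 hhom ha hk fun N ↦ ?_)
  obtain ⟨y, -, hxy⟩ := hpow N _ hx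
  obtain ⟨y, rfl⟩ := Submodule.mkQ_surjective _ y
  rw [← map_smul, ← sub_eq_zero, ← map_sub, Submodule.mkQ_apply,
    Submodule.Quotient.mk_eq_zero] at hxy
  exact Submodule.mem_sup.2
    ⟨_, hxy, _, Ideal.mul_mem_right y _ (Ideal.mem_span_singleton_self _), by simp⟩

theorem exists_mem_sub_mul_mem {I : Ideal A} (hI : I.IsHomogeneous 𝒜) {l p : A} {k e : ℕ}
    (hl : l ∈ 𝒜 k) (hp : p ∈ 𝒜 (k + e)) (hmem : p ∈ I ⊔ Ideal.span {l}) :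
    ∃ q ∈ 𝒜 e, p - l * q ∈ I := by
  obtain ⟨a, ha, b, hb, rfl⟩ := Submodule.mem_sup.1 hmem
  obtain ⟨c, rfl⟩ := Ideal.mem_span_singleton.1 hb
  refine ⟨decompose 𝒜 c e, SetLike.coe_mem _, ?_⟩
  have hcomp := decompose_of_mem_same 𝒜 hp
  rw [decompose_add, DirectSum.add_apply, AddMemClass.coe_add,
    coe_decompose_mul_add_of_left_mem 𝒜 hl] at hcomp
  rw [← hcomp, add_sub_cancel_right]
  exact hI (k + e) ha

theorem exists_mem_sub_pow_mul_mem {I : Ideal A} (hI : I.IsHomogeneous 𝒜) {l : A} {k s : ℕ}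
    (hl : l ∈ 𝒜 k) (hs : ∀ e, s ≤ e → ∀ p ∈ 𝒜 e, p ∈ I ⊔ Ideal.span {l}) {e : ℕ}
    (he : s ≤ k + e) (K : ℕ) {p : A} (hp : p ∈ 𝒜 (K * k + e)) :
    ∃ q ∈ 𝒜 e, p - l ^ K * q ∈ I := by
  induction K generalizing p with
  | zero => exact ⟨p, by simpa using hp, by simp⟩
  | succ K ih =>
    rw [show (K + 1) * k + e = k + (K * k + e) by ring] at hp
    obtain ⟨p', hp', hpI⟩ := exists_mem_sub_mul_mem 𝒜 hI hl hp (hs _ (by lia) p hp)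
    obtain ⟨q, hq, hqI⟩ := ih hp'
    refine ⟨q, hq, ?_⟩
    have hsplit : p - l ^ (K + 1) * q = (p - l * p') + l * (p' - l ^ K * q) := by ring
    exact hsplit ▸ add_mem hpI (I.mul_mem_left l hqI)

/-- Multiplying `p` by the congruence `lᴷ ≡ g c` and dividing `c p` by `lᴷ` shows that `g`
divides `p` modulo `I`. -/
theorem mem_sup_span_of_pow_mem_sup_span {I : Ideal A} (hI : I.IsHomogeneous 𝒜) {l g : A}
    {k d s K : ℕ} (hl : l ∈ 𝒜 k) (hlreg : IsSMulRegular (A ⧸ I) l)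
    (hs : ∀ e, s ≤ e → ∀ p ∈ 𝒜 e, p ∈ I ⊔ Ideal.span {l}) (hg : g ∈ 𝒜 d)
    (hK : l ^ K ∈ I ⊔ Ideal.span {g}) (hdK : d ≤ K * k) {e : ℕ} (hde : d ≤ e)
    (hse : s + d ≤ k + e) {p : A} (hp : p ∈ 𝒜 e) : p ∈ I ⊔ Ideal.span {g} := by
  obtain ⟨m, hm⟩ := Nat.exists_eq_add_of_le hdK
  obtain ⟨e, rfl⟩ := Nat.exists_eq_add_of_le hde
  have hlK : l ^ K ∈ 𝒜 (d + m) := hm ▸ SetLike.pow_mem_graded K hl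
  obtain ⟨c, hc, hcI⟩ := exists_mem_sub_mul_mem 𝒜 hI hg hlK hK
  have hcp : c * p ∈ 𝒜 (K * k + e) := by
    rw [show K * k + e = m + (d + e) by lia]
    exact SetLike.mul_mem_graded hc hp
  obtain ⟨q, -, hqI⟩ := exists_mem_sub_pow_mul_mem 𝒜 hI hl hs (by lia) K hcp
  have hpq : p - g * q ∈ I := by
    refine mem_of_isSMulRegular_quotient_of_smul_mem (hlreg.pow K) ?_
    have hsplit : l ^ K • (p - g * q) = p * (l ^ K - g * c) + g * (c * p - l ^ K * q) := by
      rw [smul_eq_mul]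
      ring
    exact hsplit ▸ add_mem (I.mul_mem_left p hcI) (I.mul_mem_left g hqI)
  exact Submodule.mem_sup.2
    ⟨_, hpq, _, Ideal.mul_mem_right q _ (Ideal.mem_span_singleton_self g), by simp⟩

theorem exists_eq_sum_mul_of_mem_span {ι : Type*} [Fintype ι] {g : ι → A} {d e : ℕ}
    (hg : ∀ i, g i ∈ 𝒜 d) {p : A} (hp : p ∈ 𝒜 (d + e)) (hmem : p ∈ Ideal.span (Set.range g)) :
    ∃ h : ι → A, (∀ i, h i ∈ 𝒜 e) ∧ p = ∑ i, g i * h i := by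
  obtain ⟨c, rfl⟩ := Ideal.mem_span_range_iff_exists_fun.1 hmem
  refine ⟨fun i ↦ decompose 𝒜 (c i) e, fun i ↦ SetLike.coe_mem _, ?_⟩
  calc ∑ i, c i * g i = GradedRing.proj 𝒜 (d + e) (∑ i, c i * g i) :=
        (decompose_of_mem_same 𝒜 hp).symm
    _ = ∑ i, GradedRing.proj 𝒜 (d + e) (g i * c i) := by simp only [map_sum, mul_comm]
    _ = ∑ i, g i * decompose 𝒜 (c i) e := Finset.sum_congr rfl fun i _ ↦
        coe_decompose_mul_add_of_left_mem 𝒜 (hg i)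

end GradedRing

section Macaulay

open RingTheory.Sequence Module

attribute [local instance] MvPolynomial.gradedAlgebra

variable {K : Type*} [Field K]

theorem eval_smul_of_isHomogeneous {R σ : Type*} [CommSemiring R] [Finite σ]
    {p : MvPolynomial σ R} {d : ℕ} (hp : p.IsHomogeneous d) (t : R) (w : σ → R) :
    eval (t • w) p = t ^ d * eval w p := by
  cases nonempty_fintype σ
  simp only [eval_eq', Finset.mul_sum]
  refine Finset.sum_congr rfl fun m hm ↦ ?_
  have hdeg : ∑ i, m i = d := by
    simpa [Finsupp.weight_apply, Finsupp.sum_fintype] using hp (mem_support_iff.1 hm)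
  simp only [Pi.smul_apply, smul_eq_mul, mul_pow, Finset.prod_mul_distrib,
    Finset.prod_pow_eq_pow_sum, hdeg]
  ring

/-- A polynomial relation `Φ` among the forms `ψ v` cuts out a hypersurface of the dual of `V`
containing every functional `v ↦ ψ v (w)`; by homogeneity no nonzero multiple of a point off that
hypersurface is such a functional. -/
theorem exists_hyperplane_forall_eval_eq_zero [IsAlgClosed K] {σ : Type*} [Fintype σ]
    {V : Type*} [AddCommGroup V] [Module K V] [FiniteDimensional K V]
    (hV : Fintype.card σ < finrank K V) {ψ : V →ₗ[K] MvPolynomial σ K} {d : ℕ} (hd : 0 < d)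
    (hψ : ∀ v, (ψ v).IsHomogeneous d) :
    ∃ Λ : Dual K V, (∃ v, Λ v ≠ 0) ∧
      ∀ w : σ → K, (∀ v, Λ v = 0 → eval w (ψ v) = 0) → ∀ v, eval w (ψ v) = 0 := by
  let b := finBasis K V
  obtain ⟨Φ, hΦ, hΦ0⟩ : ∃ Φ, aeval (ψ ∘ b) Φ = 0 ∧ Φ ≠ 0 := by
    have hdep : ¬AlgebraicIndependent K (ψ ∘ b) := fun h ↦ by
      have := h.lift_cardinalMk_le_trdeg
      simp at this
      lia
    simpa only [algebraicIndependent_iff, not_forall, exists_prop] using hdep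
  let i₀ : Fin (finrank K V) := ⟨0, by lia⟩
  obtain ⟨a, ha⟩ : ∃ a, eval a (Φ * X i₀) ≠ 0 := by
    by_contra! h
    exact mul_ne_zero hΦ0 (X_ne_zero i₀) (MvPolynomial.funext fun a ↦ by simp [h a])
  rw [map_mul, eval_X] at ha
  let Λ : Dual K V := b.constr K a
  have hΛ (i) : Λ (b i) = a i := b.constr_basis K a i
  refine ⟨Λ, ⟨b i₀, hΛ i₀ ▸ right_ne_zero_of_mul ha⟩, ?_⟩
  intro w hw
  let ev : Dual K V := (aeval w : MvPolynomial σ K →ₐ[K] K).toLinearMap ∘ₗ ψ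
  have hev (v) : ev v = eval w (ψ v) := by simp [ev, aeval_eq_eval]
  have hspan : ev ∈ Submodule.span K (Set.range fun _ : Unit ↦ Λ) :=
    mem_span_of_iInf_ker_le_ker fun v hv ↦ by simpa [hev] using hw v (by simpa using hv)
  obtain ⟨c, hc⟩ := Submodule.mem_span_singleton.1 (by simpa using hspan)
  obtain rfl | hc0 := eq_or_ne c 0
  · intro v
    rw [← hev, ← hc, zero_smul, LinearMap.zero_apply]
  obtain ⟨t, ht⟩ := IsAlgClosed.exists_pow_nat_eq c⁻¹ hd
  have hta (i) : eval (t • w) (ψ (b i)) = a i := by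
    rw [eval_smul_of_isHomogeneous (hψ _), ← hev, ← hc, LinearMap.smul_apply, hΛ, ht,
      smul_eq_mul, inv_mul_cancel_left₀ hc0]
  have hcomp : (aeval (t • w)).comp (aeval (ψ ∘ b)) = (aeval a : MvPolynomial _ K →ₐ[K] K) :=
    algHom_ext fun i ↦ by simp [aeval_eq_eval, hta]
  have hΦa : eval a Φ = 0 := by
    change aeval a Φ = 0
    rw [← hcomp, AlgHom.comp_apply, hΦ, map_zero]
  exact absurd hΦa (left_ne_zero_of_mul ha)

/-- Restriction of polynomials to the hyperplane `X 0 = 0`. -/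
noncomputable def restrictX0 (K : Type*) [Field K] (n : ℕ) :
    MvPolynomial (Fin (n + 1)) K →ₐ[K] MvPolynomial (Fin n) K :=
  aeval (Fin.cons 0 X)

theorem eval_restrictX0 {n : ℕ} (w : Fin n → K) (p : MvPolynomial (Fin (n + 1)) K) :
    eval w (restrictX0 K n p) = eval (Fin.cons 0 w : Fin (n + 1) → K) p := by
  have hcomp : (aeval w).comp (restrictX0 K n) =
      (aeval (Fin.cons 0 w : Fin (n + 1) → K) : MvPolynomial _ K →ₐ[K] K) :=
    algHom_ext (Fin.cases (by simp [restrictX0]) fun i ↦ by simp [restrictX0])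
  simpa [aeval_eq_eval] using DFunLike.congr_fun hcomp p

theorem isHomogeneous_restrictX0 {n d : ℕ} {p : MvPolynomial (Fin (n + 1)) K}
    (hp : p.IsHomogeneous d) : (restrictX0 K n p).IsHomogeneous d := by
  simpa [restrictX0] using hp.aeval (n := 1) (Fin.cons 0 X)
    (Fin.cases (isHomogeneous_zero (Fin n) K 1) fun i ↦ isHomogeneous_X K i)

theorem restrictX0_surjective (n : ℕ) : Function.Surjective (restrictX0 K n) := fun p ↦
  ⟨rename Fin.succ p, by
    simp only [restrictX0, aeval_rename, Function.comp_def, Fin.cons_succ]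
    exact aeval_X_left_apply p⟩

theorem ker_restrictX0 (n : ℕ) :
    RingHom.ker (restrictX0 K n).toRingHom = Ideal.span {X 0} := by
  refine le_antisymm (fun p hp ↦ ?_) ?_
  · let mk := Ideal.Quotient.mkₐ K (Ideal.span {(X 0 : MvPolynomial (Fin (n + 1)) K)})
    have hcomp : (mk.comp (rename Fin.succ)).comp (restrictX0 K n) = mk :=
      algHom_ext (Fin.cases (by simp [restrictX0, mk]) fun i ↦ by simp [restrictX0, mk])
    rw [← Ideal.Quotient.eq_zero_iff_mem]
    have hp0 : restrictX0 K n p = 0 := hp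
    simpa [hp0, mk] using (DFunLike.congr_fun hcomp p).symm
  · simp [Ideal.span_le, Set.singleton_subset_iff, RingHom.mem_ker, restrictX0]

theorem exists_pow_mem_of_forall_eval_eq_zero [IsAlgClosed K] {σ : Type*} [Finite σ]
    {J : Ideal (MvPolynomial σ K)} (hJ : ∀ w : σ → K, (∀ p ∈ J, eval w p = 0) → w = 0) (i : σ) :
    ∃ N, X i ^ N ∈ J := by
  have hX : X i ∈ J.radical := by
    rw [← vanishingIdeal_zeroLocus_eq_radical (K := K)]
    intro w hw
    have hw0 : w = 0 := hJ w fun p hp ↦ by simpa [aeval_eq_eval] using hw p hp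
    simp [hw0]
  exact hX

theorem isWeaklyRegular_concat_X0 {n : ℕ} {gs : List (MvPolynomial (Fin (n + 1)) K)}
    {d : ℕ} (hd : 0 < d) (hgs : ∀ g ∈ gs, g.IsHomogeneous d)
    (hreg : IsWeaklyRegular (MvPolynomial (Fin n) K) (gs.map (restrictX0 K n))) :
    IsWeaklyRegular (MvPolynomial (Fin (n + 1)) K) (gs ++ [X 0]) := by
  have hX : IsSMulRegular (MvPolynomial (Fin (n + 1)) K)
      (X 0 : MvPolynomial (Fin (n + 1)) K) := .of_ne_zero (X_ne_zero 0)
  refine isWeaklyRegular_of_perm_of_mem_graded (homogeneousSubmodule (Fin (n + 1)) K)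
    (isWeaklyRegular_cons_of_ker_eq (restrictX0_surjective n) hX (ker_restrictX0 n) hreg)
    (List.perm_append_comm (l₁ := [X 0])) fun r hr ↦ ?_
  obtain rfl | hr := List.mem_cons.1 hr
  · exact ⟨1, one_pos, isHomogeneous_X K 0⟩
  · exact ⟨d, hd, hgs r hr⟩

theorem mem_ofList_sup_span_X0 {n : ℕ} {gs : List (MvPolynomial (Fin (n + 1)) K)}
    {p : MvPolynomial (Fin (n + 1)) K}
    (hp : restrictX0 K n p ∈ Ideal.ofList (gs.map (restrictX0 K n))) :
    p ∈ Ideal.ofList gs ⊔ Ideal.span {X 0} := by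
  rw [← ker_restrictX0, RingHom.ker_eq_comap_bot,
    ← Ideal.comap_map_of_surjective (restrictX0 K n).toRingHom (restrictX0_surjective n),
    Ideal.mem_comap, Ideal.map_ofList]
  exact hp

theorem exists_pow_mem_ofList_map [IsAlgClosed K] {σ V : Type*} [Finite σ] [AddCommGroup V]
    [Module K V] {φ : V →ₗ[K] MvPolynomial σ K}
    (hzero : ∀ w : σ → K, (∀ v, eval w (φ v) = 0) → w = 0) {vs : List V}
    (hvs : Submodule.span K {v | v ∈ vs} = ⊤) (i : σ) :
    ∃ N, X i ^ N ∈ Ideal.ofList (vs.map φ) := by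
  refine exists_pow_mem_of_forall_eval_eq_zero (fun w hw ↦ hzero w fun v ↦ ?_) i
  let ev : V →ₗ[K] K := (aeval w : MvPolynomial σ K →ₐ[K] K).toLinearMap ∘ₗ φ
  have hle : Submodule.span K {v | v ∈ vs} ≤ LinearMap.ker ev := by
    refine Submodule.span_le.2 fun v hv ↦ ?_
    simpa [ev, aeval_eq_eval] using hw _ (Ideal.subset_span (List.mem_map_of_mem hv))
  simpa [ev, aeval_eq_eval] using hle (hvs ▸ Submodule.mem_top : v ∈ _)

theorem span_concat_eq_top_of_ker {V : Type*} [AddCommGroup V] [Module K V] {Λ : Dual K V}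
    {v₀ : V} (hv₀ : Λ v₀ ≠ 0) {vs : List (LinearMap.ker Λ)}
    (hvs : Submodule.span K {v | v ∈ vs} = ⊤) :
    Submodule.span K {v | v ∈ vs.map (LinearMap.ker Λ).subtype ++ [v₀]} = ⊤ := by
  have hker : LinearMap.ker Λ ≤
      Submodule.span K {v | v ∈ vs.map (LinearMap.ker Λ).subtype ++ [v₀]} := by
    have hmap := congrArg (Submodule.map (LinearMap.ker Λ).subtype) hvs
    rw [Submodule.map_subtype_top, Submodule.map_span] at hmap
    refine hmap.ge.trans (Submodule.span_mono ?_)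
    rintro _ ⟨v, hv, rfl⟩
    exact List.mem_append_left _ (List.mem_map_of_mem hv)
  have hmem : v₀ ∈ Submodule.span K {v | v ∈ vs.map (LinearMap.ker Λ).subtype ++ [v₀]} :=
    Submodule.subset_span (by simp)
  refine Submodule.eq_top_iff'.2 fun v ↦ ?_
  have hsplit : v - (Λ v / Λ v₀) • v₀ ∈ LinearMap.ker Λ := by simp [hv₀]
  simpa using add_mem (hker hsplit) (Submodule.smul_mem _ (Λ v / Λ v₀) hmem)

theorem exists_hyperplane_restrictX0 [IsAlgClosed K] {n : ℕ} {V : Type*} [AddCommGroup V]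
    [Module K V] [FiniteDimensional K V] (hV : finrank K V = n + 1)
    {φ : V →ₗ[K] MvPolynomial (Fin (n + 1)) K} {d : ℕ} (hd : 0 < d)
    (hφ : ∀ v, (φ v).IsHomogeneous d)
    (hzero : ∀ w : Fin (n + 1) → K, (∀ v, eval w (φ v) = 0) → w = 0) :
    ∃ Λ : Dual K V, (∃ v, Λ v ≠ 0) ∧
      ∀ w : Fin n → K, (∀ v, Λ v = 0 → eval w (restrictX0 K n (φ v)) = 0) → w = 0 := by
  obtain ⟨Λ, hΛ, hΛzero⟩ := exists_hyperplane_forall_eval_eq_zero (σ := Fin n)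
    (ψ := (restrictX0 K n).toLinearMap ∘ₗ φ) (by simp [hV]) hd
    fun v ↦ isHomogeneous_restrictX0 (hφ v)
  refine ⟨Λ, hΛ, fun w hw ↦ ?_⟩
  have hcons := hzero (Fin.cons 0 w) fun v ↦ eval_restrictX0 w (φ v) ▸ hΛzero w hw v
  exact funext fun i ↦ congrFun hcons i.succ

/-- The induction cuts with the hyperplane `X 0 = 0`: some hyperplane of `V` still has no common
zero there, which gives a regular sequence together with `X 0`, and a power of `X 0` can be traded
for the last form. -/
theorem exists_isWeaklyRegular_and_forall_mem [IsAlgClosed K] {n : ℕ} {V : Type*}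
    [AddCommGroup V] [Module K V] [FiniteDimensional K V] (hV : finrank K V = n)
    {φ : V →ₗ[K] MvPolynomial (Fin n) K} {d : ℕ} (hd : 0 < d)
    (hφ : ∀ v, (φ v).IsHomogeneous d)
    (hzero : ∀ w : Fin n → K, (∀ v, eval w (φ v) = 0) → w = 0) :
    ∃ vs : List V, Submodule.span K {v | v ∈ vs} = ⊤ ∧
      IsWeaklyRegular (MvPolynomial (Fin n) K) (vs.map φ) ∧
      ∀ e, n * d < n + e → ∀ p ∈ homogeneousSubmodule (Fin n) K e,
        p ∈ Ideal.ofList (vs.map φ) := by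
  induction n generalizing V with
  | zero =>
    have := finrank_zero_iff.1 hV
    refine ⟨[], Subsingleton.elim _ _, .nil _ _, fun e he p hp ↦ ?_⟩
    have hp0 : p = 0 := by
      rw [eq_C_of_isEmpty p, hp.coeff_eq_zero (by simp; lia), C_0]
    exact hp0 ▸ zero_mem _
  | succ n ih =>
    obtain ⟨Λ, ⟨v₀, hv₀⟩, hΛzero⟩ := exists_hyperplane_restrictX0 hV hd hφ hzero
    obtain ⟨vs, hvs, hreg, hbound⟩ := ih (V := LinearMap.ker Λ)
      (φ := ((restrictX0 K n).toLinearMap ∘ₗ φ) ∘ₗ (LinearMap.ker Λ).subtype)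
      (by have := Dual.finrank_ker_add_one_of_ne_zero (f := Λ) (by rintro rfl; simp at hv₀); lia)
      (fun v ↦ isHomogeneous_restrictX0 (hφ v)) fun w hw ↦ hΛzero w fun v hv ↦ hw ⟨v, hv⟩
    let gs := (vs.map (LinearMap.ker Λ).subtype).map φ
    have hmap : vs.map (((restrictX0 K n).toLinearMap ∘ₗ φ) ∘ₗ (LinearMap.ker Λ).subtype) =
        gs.map (restrictX0 K n) := by simp [gs]
    rw [hmap] at hreg hbound
    have hspan := span_concat_eq_top_of_ker hv₀ hvs
    have hgs : ∀ g ∈ gs, g.IsHomogeneous d := List.forall_mem_map.2 fun v _ ↦ hφ v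
    obtain ⟨hgsreg, hX0⟩ := isWeaklyRegular_concat_iff.1 (isWeaklyRegular_concat_X0 hd hgs hreg)
    obtain ⟨N, hN⟩ := exists_pow_mem_ofList_map hzero hspan 0
    have hofList : Ideal.ofList ((vs.map (LinearMap.ker Λ).subtype ++ [v₀]).map φ) =
        Ideal.ofList gs ⊔ Ideal.span {φ v₀} := by
      rw [List.map_append, Ideal.ofList_append, List.map_singleton, Ideal.ofList_singleton]
    replace hN : X 0 ^ (N + d) ∈ Ideal.ofList gs ⊔ Ideal.span {φ v₀} :=
      hofList ▸ Ideal.pow_mem_of_pow_mem _ hN (Nat.le_add_right N d)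
    refine ⟨_, hspan, ?_, fun e he p hp ↦ ?_⟩
    · rw [List.map_append, List.map_singleton, isWeaklyRegular_concat_iff]
      exact ⟨hgsreg, isSMulRegular_quotient_of_pow_mem_sup_span hX0 hN⟩
    · have hnd : n ≤ n * d := Nat.le_mul_of_pos_right n hd
      rw [add_mul, one_mul] at he
      rw [hofList]
      exact mem_sup_span_of_pow_mem_sup_span (homogeneousSubmodule (Fin (n + 1)) K)
        (s := n * d + 1 - n) (isHomogeneous_ofList _ fun g hg ↦ ⟨d, hd, hgs g hg⟩)
        (isHomogeneous_X K 0) hX0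
        (fun e he q hq ↦ mem_ofList_sup_span_X0
          (hbound e (by lia) _ (isHomogeneous_restrictX0 hq)))
        (hφ v₀) hN (by lia) (by lia) (by lia) hp

/-- Macaulay's bound. -/
theorem exists_eq_sum_mul_of_isHomogeneous [IsAlgClosed K] {σ : Type*} [Fintype σ]
    {φ : σ → MvPolynomial σ K} {d : ℕ} (hd : 0 < d) (hφ : ∀ i, (φ i).IsHomogeneous d)
    (hzero : ∀ w : σ → K, (∀ i, eval w (φ i) = 0) → w = 0) {e : ℕ}
    (he : Fintype.card σ * d < Fintype.card σ + d + e) {p : MvPolynomial σ K}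
    (hp : p.IsHomogeneous (d + e)) :
    ∃ h : σ → MvPolynomial σ K, (∀ i, (h i).IsHomogeneous e) ∧ p = ∑ i, φ i * h i := by
  let ε := Fintype.equivFin σ
  let φ' : (σ → K) →ₗ[K] MvPolynomial (Fin (Fintype.card σ)) K :=
    (rename ε : MvPolynomial σ K →ₐ[K] _).toLinearMap ∘ₗ Fintype.linearCombination K φ
  have hφ' (v : σ → K) : φ' v = ∑ i, v i • rename ε (φ i) := by
    simp [φ', Fintype.linearCombination_apply]
  obtain ⟨vs, -, -, hbound⟩ := exists_isWeaklyRegular_and_forall_mem (φ := φ')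
    (finrank_fintype_fun_eq_card K) hd
    (fun v ↦ hφ' v ▸ IsHomogeneous.sum _ _ _ fun i _ ↦
      (smul_eq_C_mul (rename ε (φ i)) (v i)).symm ▸ (hφ i).rename_isHomogeneous.C_mul (v i))
    fun w hw ↦ by
      have hwε : w ∘ ε = 0 := hzero _ fun i ↦ by
        classical simpa [hφ', Pi.single_apply, eval_rename] using hw (Pi.single i 1)
      exact funext fun j ↦ by simpa using congrFun hwε (ε.symm j)
  have hle : Ideal.ofList (vs.map φ') ≤ (Ideal.span (Set.range φ)).map (rename ε) := by
    refine Ideal.span_le.2 (List.forall_mem_map.2 fun v _ ↦ hφ' v ▸ sum_mem fun i _ ↦ ?_)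
    rw [smul_eq_C_mul]
    exact Ideal.mul_mem_left _ _ (Ideal.mem_map_of_mem _ (Ideal.subset_span ⟨i, rfl⟩))
  have hmem := hle (hbound (d + e) (by lia) (rename ε p) hp.rename_isHomogeneous)
  obtain ⟨q, hq, hqp⟩ := (Ideal.mem_map_iff_of_surjective _
    (rename_surjective ε ε.surjective)).1 hmem
  rw [rename_injective ε ε.injective hqp] at hq
  exact exists_eq_sum_mul_of_mem_span (homogeneousSubmodule σ K) hφ hp hq

end Macaulay

section Polytope

open Filter Topology

variable {σ : Type*} {f : MvPolynomial σ ℂ}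

theorem toR_add (a b : σ →₀ ℕ) : toR (a + b) = toR a + toR b := by
  ext i
  simp [toR]

theorem toR_single [DecidableEq σ] (i : σ) (k : ℕ) :
    toR (Finsupp.single i k) = (k : ℝ) • Pi.single i 1 := by
  ext j
  obtain rfl | h := eq_or_ne i j <;> simp [toR, *, Ne.symm]

theorem zero_mem_newtonPolytope : (0 : σ → ℝ) ∈ newtonPolytope f :=
  subset_convexHull _ _ (Or.inl rfl)

theorem toR_mem_newtonPolytope {a : σ →₀ ℕ} (ha : a ∈ f.support) : toR a ∈ newtonPolytope f :=
  subset_convexHull _ _ (Or.inr ⟨a, ha, rfl⟩)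

theorem isCompact_newtonPolytope : IsCompact (newtonPolytope f) :=
  ((Set.finite_singleton _).union (f.support.finite_toSet.image _)).isCompact_convexHull ℝ

theorem le_one_of_mem_newtonPolytope {y : (σ → ℝ) →ₗ[ℝ] ℝ}
    (hy : ∀ a ∈ f.support, y (toR a) ≤ 1) {x : σ → ℝ} (hx : x ∈ newtonPolytope f) : y x ≤ 1 := by
  refine convexHull_min (t := {x | y x ≤ 1}) ?_ (convex_halfSpace_le y.isLinear 1) hx
  rintro _ (rfl | ⟨a, ha, rfl⟩)
  · simp
  · exact hy a ha

theorem nbFace_of_le_one {y : (σ → ℝ) →ₗ[ℝ] ℝ} (hy : ∀ x ∈ newtonPolytope f, y x ≤ 1)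
    {x : σ → ℝ} (hx : x ∈ newtonPolytope f) (hyx : y x = 1) :
    NBFace f {x ∈ newtonPolytope f | y x = 1} :=
  ⟨⟨⟨x, hx, hyx⟩, y, 1, hy, rfl⟩, fun h ↦ by simpa using h.2⟩

variable [Finite σ] [Nonempty σ]

theorem exists_smul_mem_interior_newtonPolytope (hf : Convenient f) {w : σ → ℝ}
    (hw : ∀ i, 0 < w i) : ∃ t : ℝ, 0 < t ∧ t • w ∈ interior (newtonPolytope f) := by
  classical
  cases nonempty_fintype σ
  choose k hk hkf using hf
  have hk0 : ∀ i, (0 : ℝ) < k i := fun i ↦ by exact_mod_cast hk i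
  let U : Set (σ → ℝ) := {x | ∀ i, 0 < x i} ∩ {x | ∑ i, x i / k i < 1}
  have hUopen : IsOpen U := by
    refine .inter ?_ (isOpen_lt (by fun_prop) continuous_const)
    simpa only [Set.ofPred_forall] using
      isOpen_iInter_of_finite fun i ↦ isOpen_lt continuous_const (continuous_apply i)
  have hUsub : U ⊆ newtonPolytope f := by
    rintro x ⟨hx, hx1⟩
    have hpos : ∀ i, 0 < x i / k i := fun i ↦ div_pos (hx i) (hk0 i)
    have hsum : 0 < ∑ i, x i / k i := Finset.sum_pos (fun i _ ↦ hpos i) Finset.univ_nonempty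
    have hcenter := (convex_convexHull ℝ _).centerMass_mem (fun i _ ↦ (hpos i).le) hsum
      fun i _ ↦ toR_mem_newtonPolytope (mem_support_iff.2 (hkf i))
    have hmem := (convex_convexHull ℝ _).smul_mem_of_zero_mem zero_mem_newtonPolytope hcenter
      ⟨hsum.le, hx1.le⟩
    simp_rw [Finset.centerMass, smul_inv_smul₀ hsum.ne', toR_single, smul_smul,
      div_mul_cancel₀ _ (hk0 _).ne'] at hmem
    rwa [← pi_eq_sum_univ' x] at hmem
  have hsmall : ∀ᶠ t : ℝ in 𝓝[>] 0, ∑ i, (t • w) i / k i < 1 := by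
    refine nhdsWithin_le_nhds (ContinuousAt.eventually_lt (by fun_prop) continuousAt_const ?_)
    simp
  obtain ⟨t, ht1, ht0⟩ := (hsmall.and self_mem_nhdsWithin).exists
  exact ⟨t, ht0, interior_maximal hUsub hUopen ⟨fun i ↦ mul_pos ht0 (hw i), ht1⟩⟩

theorem exists_supporting_functional (hf : Convenient f) {w : σ → ℝ} (hw : ∀ i, 0 < w i) :
    ∃ (y : (σ → ℝ) →ₗ[ℝ] ℝ) (r : ℝ), 0 < r ∧ r • w ∈ newtonPolytope f ∧ y (r • w) = 1 ∧
      ∀ x ∈ newtonPolytope f, y x ≤ 1 := by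
  obtain ⟨s, hs, hsw⟩ := exists_smul_mem_interior_newtonPolytope hf hw
  have hsub : ∀ {t : ℝ}, t • w ∈ interior (newtonPolytope f) → t • w ∈ newtonPolytope f :=
    fun h ↦ interior_subset h
  have hw0 : w ≠ 0 := fun h ↦ by simpa [h] using hw (Classical.arbitrary σ)
  have hcompact : IsCompact {t : ℝ | t • w ∈ newtonPolytope f} :=
    (isClosedEmbedding_smul_left hw0).isCompact_preimage isCompact_newtonPolytope
  obtain ⟨r, hrw, hmax⟩ := hcompact.exists_isGreatest ⟨s, hsub hsw⟩
  have hnot : r • w ∉ interior (newtonPolytope f) := fun hint ↦ by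
    have hnear : ∀ᶠ t : ℝ in 𝓝 r, t • w ∈ interior (newtonPolytope f) :=
      ContinuousAt.eventually_mem (by fun_prop) (isOpen_interior.mem_nhds hint)
    obtain ⟨t, ht, hrt⟩ :=
      ((hnear.filter_mono nhdsWithin_le_nhds).and (self_mem_nhdsWithin (s := Set.Ioi r))).exists
    exact (hmax (hsub ht)).not_gt hrt
  have hsr : s < r := lt_of_le_of_ne (hmax (hsub hsw)) fun h ↦ hnot (h ▸ hsw)
  have hconv : Convex ℝ (newtonPolytope f) := convex_convexHull ℝ _
  obtain ⟨l, hl⟩ := geometric_hahn_banach_open_point hconv.interior isOpen_interior hnot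
  have hlw : 0 < l w := by
    have := hl _ hsw
    simp only [map_smul, smul_eq_mul] at this
    nlinarith
  have hle : ∀ x ∈ newtonPolytope f, l x ≤ r * l w := fun x hx ↦ by
    have hx' := subset_closure hx
    rw [← hconv.closure_interior_eq_closure_of_nonempty_interior ⟨_, hsw⟩] at hx'
    refine closure_minimal (fun a ha ↦ ?_) (isClosed_le l.continuous continuous_const) hx'
    simpa using (hl a ha).le
  have hr : 0 < r * l w := mul_pos (hs.trans hsr) hlw
  refine ⟨(r * l w)⁻¹ • (l : (σ → ℝ) →ₗ[ℝ] ℝ), r, hs.trans hsr, hrw, ?_, fun x hx ↦ ?_⟩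
  · rw [LinearMap.smul_apply, ContinuousLinearMap.coe_coe, map_smul]
    exact inv_mul_cancel₀ hr.ne'
  · simpa using (inv_mul_le_one₀ hr).2 (hle x hx)

end Polytope

section Facets

open Filter Topology

theorem linearIndependent_of_affineIndependent_of_eq_one {ι V : Type*} [AddCommGroup V]
    [Module ℝ V] {p : ι → V} (hp : AffineIndependent ℝ p) (y : V →ₗ[ℝ] ℝ)
    (hy : ∀ i, y (p i) = 1) : LinearIndependent ℝ p := by
  rw [linearIndependent_iff']
  intro s g hg i hi
  refine affineIndependent_iff.1 hp s g ?_ hg i hi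
  simpa [map_sum, hy] using congrArg y hg

theorem isExtreme_setOf_eq_of_le {V : Type*} [AddCommGroup V] [Module ℝ V] {A : Set V}
    {l : V →ₗ[ℝ] ℝ} {c : ℝ} (hl : ∀ x ∈ A, l x ≤ c) : IsExtreme ℝ A {x ∈ A | l x = c} := by
  refine ⟨fun x hx ↦ hx.1, ?_⟩
  rintro x₁ hx₁ x₂ hx₂ _ ⟨-, hx⟩ ⟨s, t, hs, ht, hst, rfl⟩
  refine ⟨hx₁, (hl x₁ hx₁).antisymm (le_of_not_gt fun hlt ↦ hx.not_lt ?_)⟩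
  calc l (s • x₁ + t • x₂) = s * l x₁ + t * l x₂ := by simp
    _ < s * c + t * c := add_lt_add_of_lt_of_le (mul_lt_mul_of_pos_left hlt hs)
        (mul_le_mul_of_nonneg_left (hl x₂ hx₂) ht.le)
    _ = c := by rw [← add_mul, hst, one_mul]

theorem mem_extremePoints_convexHull_range {ι V : Type*} [AddCommGroup V] [Module ℝ V]
    {p : ι → V} (hp : LinearIndependent ℝ p) (i : ι) :
    p i ∈ (convexHull ℝ (Set.range p)).extremePoints ℝ := by
  classical
  obtain ⟨l, hl⟩ := LinearMap.exists_extend ((Module.Basis.span hp).coord i)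
  have hlp : ∀ j, l (p j) = if j = i then 1 else 0 := fun j ↦ by
    have := LinearMap.congr_fun hl (Module.Basis.span hp j)
    simpa [Module.Basis.span_apply, Finsupp.single_apply] using this
  have key : ∀ x ∈ convexHull ℝ (Set.range p), l x ≤ 1 ∧ (l x = 1 → x = p i) := by
    rw [convexHull_range_eq_exists_affineCombination]
    rintro _ ⟨s, w, hw0, hw1, rfl⟩
    simp only [s.affineCombination_eq_linear_combination p w hw1, map_sum, map_smul, hlp,
      smul_eq_mul, mul_ite, mul_one, mul_zero, Finset.sum_ite_eq']
    split_ifs with hi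
    · refine ⟨hw1 ▸ Finset.single_le_sum hw0 hi, fun hwi ↦ ?_⟩
      have hrest : ∀ j ∈ s.erase i, w j = 0 := by
        rw [← Finset.sum_eq_zero_iff_of_nonneg fun j hj ↦ hw0 j (Finset.mem_of_mem_erase hj)]
        linarith [Finset.add_sum_erase s w hi]
      rw [Finset.sum_eq_single_of_mem i hi fun j hj hji ↦ by
        rw [hrest j (Finset.mem_erase.2 ⟨hji, hj⟩), zero_smul], hwi, one_smul]
    · exact ⟨zero_le_one, fun h ↦ absurd h zero_ne_one⟩
  have hi : p i ∈ convexHull ℝ (Set.range p) := subset_convexHull ℝ _ ⟨i, rfl⟩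
  rw [← isExtreme_singleton]
  convert isExtreme_setOf_eq_of_le fun x hx ↦ (key x hx).1
  ext x
  refine ⟨?_, fun hx ↦ (key x hx.1).2 hx.2⟩
  rintro rfl
  exact ⟨hi, by simp [hlp]⟩

theorem repr_nonneg_of_mem_convexHull_range {ι V : Type*} [AddCommGroup V] [Module ℝ V]
    (b : Module.Basis ι ℝ V) {x : V} (hx : x ∈ convexHull ℝ (Set.range b)) (i : ι) :
    0 ≤ b.repr x i := by
  classical
  refine convexHull_min (t := {x | 0 ≤ b.coord i x}) ?_
    (convex_halfSpace_ge (b.coord i).isLinear 0) hx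
  rintro _ ⟨j, rfl⟩
  by_cases h : j = i <;> simp [h]

variable {σ : Type*} {f : MvPolynomial σ ℂ}

theorem exists_toR_eq_of_mem_extremePoints {Δ : Set (σ → ℝ)} (hΔ : NBFace f Δ) {x : σ → ℝ}
    (hx : x ∈ Δ.extremePoints ℝ) : ∃ a ∈ f.support, toR a = x := by
  obtain ⟨⟨-, l, c, hl, rfl⟩, h0⟩ := hΔ
  have hext := isExtreme_setOf_eq_of_le (A := newtonPolytope f) hl
  rcases extremePoints_convexHull_subset (hext.extremePoints_subset_extremePoints hx) with rfl | h
  · exact absurd hx.1 h0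
  · exact h

/-- A point generic for `f`: it avoids the proper subspaces spanned by exponents of `f`. -/
def IsGeneric (f : MvPolynomial σ ℂ) (x : σ → ℝ) : Prop :=
  ∀ T ⊆ (f.support : Set (σ →₀ ℕ)), x ∈ Submodule.span ℝ (toR '' T) →
    Submodule.span ℝ (toR '' T) = ⊤

/-- The basis `v` consists of the vertices of a facet of the Newton boundary of `f` that is a
simplex; the linear function `u_F` of this facet is `v.sumCoords`. -/
structure IsSimplicialFacet (f : MvPolynomial σ ℂ) (v : Module.Basis σ ℝ (σ → ℝ)) : Prop where
  exists_toR_eq : ∀ i, ∃ a ∈ f.support, toR a = v i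
  sumCoords_le_one : ∀ a ∈ f.support, v.sumCoords (toR a) ≤ 1
  repr_nonneg : ∀ a ∈ f.support, v.sumCoords (toR a) = 1 → ∀ i, 0 ≤ v.repr (toR a) i

theorem IsSimplicialFacet.nonneg {v : Module.Basis σ ℝ (σ → ℝ)}
    (hv : IsSimplicialFacet f v) (i : σ) : 0 ≤ v i := by
  obtain ⟨a, -, ha⟩ := hv.exists_toR_eq i
  exact ha ▸ fun j ↦ (a j).cast_nonneg

theorem finite_setOf_isSimplicialFacet [Finite σ] : {v | IsSimplicialFacet f v}.Finite := by
  refine .of_finite_image (f := fun v i ↦ v i) ?_ fun v _ v' _ h ↦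
    Module.Basis.eq_of_apply_eq (congrFun h)
  refine (Set.Finite.pi' fun _ : σ ↦ f.support.finite_toSet.image toR).subset ?_
  rintro _ ⟨v, hv, rfl⟩
  exact hv.exists_toR_eq

variable [Finite σ] [Nonempty σ]

theorem exists_isSimplicialFacet (hf : Convenient f)
    (hsimp : ∀ Δ, NBFace f Δ → IsSimplex Δ) {w : σ → ℝ} (hw : ∀ i, 0 < w i)
    (hgen : IsGeneric f w) : ∃ v, IsSimplicialFacet f v ∧ ∀ i, 0 ≤ v.repr w i := by
  cases nonempty_fintype σ
  obtain ⟨y, r, hr, hrw, hyr, hy⟩ := exists_supporting_functional hf hw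
  have hΔ := nbFace_of_le_one hy hrw hyr
  obtain ⟨k, p, hp, hΔp⟩ := hsimp _ hΔ
  have hpΔ : ∀ i, y (p i) = 1 := fun i ↦
    (hΔp.symm ▸ subset_convexHull ℝ _ ⟨i, rfl⟩ : p i ∈ {x ∈ newtonPolytope f | y x = 1}).2
  have hli := linearIndependent_of_affineIndependent_of_eq_one hp y hpΔ
  have hmem : ∀ i, ∃ a ∈ f.support, toR a = p i := fun i ↦
    exists_toR_eq_of_mem_extremePoints hΔ (hΔp ▸ mem_extremePoints_convexHull_range hli i)
  have hsub : convexHull ℝ (Set.range p) ⊆ Submodule.span ℝ (Set.range p) :=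
    convexHull_min Submodule.subset_span (Submodule.convex _)
  have hspan : ⊤ ≤ Submodule.span ℝ (Set.range p) := by
    choose a ha hap using hmem
    have hrange : toR '' Set.range a = Set.range p := by
      rw [← Set.range_comp]
      exact congrArg Set.range (funext hap)
    rw [← hrange, hgen (Set.range a) (Set.range_subset_iff.2 ha)]
    rw [hrange]
    exact (Submodule.smul_mem_iff _ hr.ne').1 (hsub (hΔp.subset ⟨hrw, hyr⟩))
  let b := Module.Basis.mk hli hspan
  let e : Fin (k + 1) ≃ σ := Fintype.equivOfCardEq <| by
    rw [← Module.finrank_eq_card_basis b, Module.finrank_fintype_fun_eq_card]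
  have hbp : ∀ i, b.reindex e i = p (e.symm i) := fun i ↦ by simp [b]
  have hsum : (b.reindex e).sumCoords = y := (b.reindex e).ext fun i ↦ by
    rw [Module.Basis.sumCoords_self_apply, hbp, hpΔ]
  have hnonneg : ∀ x ∈ newtonPolytope f, y x = 1 → ∀ i, 0 ≤ (b.reindex e).repr x i :=
    fun x hx hyx ↦ repr_nonneg_of_mem_convexHull_range _ <| by
      rw [Module.Basis.range_reindex, Module.Basis.coe_mk, ← hΔp]
      exact ⟨hx, hyx⟩
  refine ⟨b.reindex e, ⟨fun i ↦ ?_, fun a ha ↦ ?_, fun a ha h i ↦ ?_⟩, fun i ↦ ?_⟩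
  · rw [hbp]
    exact hmem _
  · rw [hsum]
    exact hy _ (toR_mem_newtonPolytope ha)
  · exact hnonneg _ (toR_mem_newtonPolytope ha) (hsum ▸ h) i
  · have := hnonneg _ hrw hyr i
    rw [map_smul, Finsupp.smul_apply, smul_eq_mul] at this
    exact nonneg_of_mul_nonneg_right this hr

end Facets

section PerturbedCone

open Filter Topology MeasureTheory Module

theorem eventually_add_smul_notMem {V : Type*} [AddCommGroup V] [Module ℝ V]
    {W : Submodule ℝ V} {p : V} (hp : p ∉ W) (x : V) : ∀ᶠ t : ℝ in 𝓝[>] 0, x + t • p ∉ W := by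
  have hsub : {t : ℝ | x + t • p ∈ W}.Subsingleton := fun s hs t ht ↦ by
    by_contra hst
    have := W.sub_mem hs ht
    rw [add_sub_add_left_eq_sub, ← sub_smul] at this
    exact hp ((W.smul_mem_iff (sub_ne_zero.2 hst)).1 this)
  have hne : ∀ s ∈ {t : ℝ | x + t • p ∈ W}, ∀ᶠ t : ℝ in 𝓝[>] 0, t ≠ s := fun s _ ↦ by
    obtain rfl | hs := eq_or_ne s 0
    · exact eventually_mem_nhdsWithin.mono fun t ht ↦ ne_of_gt ht
    · exact nhdsWithin_le_nhds (isOpen_ne.mem_nhds hs.symm)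
  filter_upwards [(eventually_all_finite hsub.finite).2 hne] with t ht hmem
  exact ht t hmem rfl

variable {σ : Type*} {f : MvPolynomial σ ℂ} {p x : σ → ℝ}

theorem IsGeneric.eventually_add_smul (hp : IsGeneric f p) (x : σ → ℝ) :
    ∀ᶠ t : ℝ in 𝓝[>] 0, IsGeneric f (x + t • p) := by
  refine (eventually_all_finite f.support.finite_toSet.finite_subsets).2 fun T hT ↦ ?_
  by_cases hpT : p ∈ Submodule.span ℝ (toR '' T)
  · exact .of_forall fun _ _ ↦ hp T hT hpT
  · exact (eventually_add_smul_notMem hpT x).mono fun t ht hmem ↦ absurd hmem ht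

theorem exists_isGeneric_of_pos [Finite σ] (f : MvPolynomial σ ℂ) :
    ∃ p : σ → ℝ, (∀ i, 0 < p i) ∧ IsGeneric f p := by
  cases nonempty_fintype σ
  have hae : ∀ᵐ p : σ → ℝ, IsGeneric f p := by
    refine (ae_ball_iff f.support.finite_toSet.finite_subsets.countable).2 fun T _ ↦ ?_
    by_cases htop : Submodule.span ℝ (toR '' T) = ⊤
    · exact .of_forall fun _ _ ↦ htop
    · refine (measure_eq_zero_iff_ae_notMem.1 (Measure.addHaar_submodule volume _ htop)).mono ?_
      exact fun p hp hmem ↦ absurd hmem hp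
  have hopen : IsOpen {p : σ → ℝ | ∀ i, 0 < p i} := by
    simpa only [Set.ofPred_forall] using
      isOpen_iInter_of_finite fun i ↦ isOpen_lt continuous_const (continuous_apply i)
  exact (Measure.dense_of_ae hae).inter_open_nonempty _ hopen ⟨1, fun _ ↦ one_pos⟩

/-- The points `x` such that `x + t • p` lies in the cone spanned by `v` for all small `t > 0`.
For generic `p` these half-open cones remove the ambiguity of points lying in several cones over
facets, since they record the cone entered when moving from `x` in the direction `p`. -/
def perturbedCone (v : Basis σ ℝ (σ → ℝ)) (p : σ → ℝ) : Set (σ → ℝ) :=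
  {x | ∀ i, 0 ≤ v.repr x i ∧ (v.repr p i < 0 → 0 < v.repr x i)}

theorem exists_mem_perturbedCone [Finite σ] [Nonempty σ] (hf : Convenient f)
    (hsimp : ∀ Δ, NBFace f Δ → IsSimplex Δ) (hp : ∀ i, 0 < p i) (hgen : IsGeneric f p)
    (hx : ∀ i, 0 ≤ x i) : ∃ v, IsSimplicialFacet f v ∧ x ∈ perturbedCone v p := by
  have hev : ∀ᶠ t : ℝ in 𝓝[>] 0, ∃ v ∈ {v | IsSimplicialFacet f v},
      ∀ i, 0 ≤ v.repr (x + t • p) i := by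
    filter_upwards [hgen.eventually_add_smul x, self_mem_nhdsWithin] with t ht ht0
    exact exists_isSimplicialFacet hf hsimp
      (fun i ↦ add_pos_of_nonneg_of_pos (hx i) (mul_pos ht0 (hp i))) ht
  obtain ⟨v, hv, hfreq⟩ : ∃ v, IsSimplicialFacet f v ∧
      ∃ᶠ t : ℝ in 𝓝[>] 0, ∀ i, 0 ≤ v.repr (x + t • p) i := by
    by_contra! hcon
    obtain ⟨t, ⟨v, hv, hvt⟩, ht⟩ :=
      (hev.and ((eventually_all_finite finite_setOf_isSimplicialFacet).2 hcon)).exists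
    obtain ⟨i, hi⟩ := ht v hv
    exact hi.not_ge (hvt i)
  refine ⟨v, hv, fun i ↦ ⟨le_of_not_gt fun hneg ↦ ?_, fun hpi ↦ ?_⟩⟩
  · have hcont : ∀ᶠ t : ℝ in 𝓝[>] 0, v.repr x i + t * v.repr p i < 0 :=
      nhdsWithin_le_nhds (ContinuousAt.eventually_lt (by fun_prop) continuousAt_const (by simpa))
    obtain ⟨t, h0, hlt⟩ := (hfreq.and_eventually hcont).exists
    exact hlt.not_ge (by simpa using h0 i)
  · obtain ⟨t, h0, ht⟩ := (hfreq.and_eventually self_mem_nhdsWithin).exists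
    have h := h0 i
    simp only [map_add, map_smul, Finsupp.add_apply, Finsupp.smul_apply, smul_eq_mul] at h
    linarith [mul_neg_of_pos_of_neg ht hpi]

variable {v : Basis σ ℝ (σ → ℝ)}

theorem IsSimplicialFacet.repr_ne_zero (hv : IsSimplicialFacet f v) (hp : IsGeneric f p) (i : σ) :
    v.repr p i ≠ 0 := fun hi ↦ by
  have himage : toR '' {a ∈ (f.support : Set (σ →₀ ℕ)) | toR a ∈ v '' {i}ᶜ} = v '' {i}ᶜ := by
    refine Set.Subset.antisymm (Set.image_subset_iff.2 fun a ha ↦ ha.2) ?_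
    rintro _ ⟨j, hj, rfl⟩
    obtain ⟨a, ha, haj⟩ := hv.exists_toR_eq j
    exact ⟨a, ⟨ha, haj ▸ ⟨j, hj, rfl⟩⟩, haj⟩
  have htop := hp _ (Set.sep_subset _ _) <| by
    rw [himage, v.mem_span_image]
    exact fun j hj hji ↦ Finsupp.mem_support_iff.1 hj (hji ▸ hi)
  rw [himage] at htop
  exact v.linearIndependent.notMem_span_image (by simp)
    (htop ▸ Submodule.mem_top (x := v i))

variable {y : (σ → ℝ) →ₗ[ℝ] ℝ}

theorem IsSimplicialFacet.apply_le_one (hv : IsSimplicialFacet f v)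
    (hy : ∀ a ∈ f.support, y (toR a) ≤ 1) (i : σ) : y (v i) ≤ 1 := by
  obtain ⟨a, ha, hai⟩ := hv.exists_toR_eq i
  exact hai ▸ hy a ha

theorem sumCoords_eq_sum_repr [Fintype σ] (v : Basis σ ℝ (σ → ℝ)) (x : σ → ℝ) :
    v.sumCoords x = ∑ i, v.repr x i := by
  simp

theorem apply_eq_sum_repr_mul [Fintype σ] (v : Basis σ ℝ (σ → ℝ)) (y : (σ → ℝ) →ₗ[ℝ] ℝ)
    (x : σ → ℝ) : y x = ∑ i, v.repr x i * y (v i) := by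
  conv_lhs => rw [← v.sum_repr x]
  simp only [map_sum, map_smul, smul_eq_mul]

variable [Finite σ]

theorem IsSimplicialFacet.apply_le_sumCoords (hv : IsSimplicialFacet f v)
    (hy : ∀ a ∈ f.support, y (toR a) ≤ 1) (hx : ∀ i, 0 ≤ v.repr x i) :
    y x ≤ v.sumCoords x := by
  cases nonempty_fintype σ
  rw [sumCoords_eq_sum_repr, apply_eq_sum_repr_mul v y]
  exact Finset.sum_le_sum fun i _ ↦ mul_le_of_le_one_right (hx i) (hv.apply_le_one hy i)

theorem IsSimplicialFacet.apply_lt_sumCoords (hv : IsSimplicialFacet f v) (hp : IsGeneric f p)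
    (hx : x ∈ perturbedCone v p) (hy : ∀ a ∈ f.support, y (toR a) ≤ 1)
    (hyx : y x = v.sumCoords x) (hne : y ≠ v.sumCoords) : y p < v.sumCoords p := by
  cases nonempty_fintype σ
  have hdiff : ∀ z, v.sumCoords z - y z = ∑ i, v.repr z i * (1 - y (v i)) := fun z ↦ by
    simp_rw [mul_sub, mul_one, Finset.sum_sub_distrib, ← sumCoords_eq_sum_repr,
      ← apply_eq_sum_repr_mul]
  have hslack : ∀ i, 0 ≤ 1 - y (v i) := fun i ↦ sub_nonneg.2 (hv.apply_le_one hy i)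
  have hzero : ∀ i, v.repr x i * (1 - y (v i)) = 0 := fun i ↦
    (Finset.sum_eq_zero_iff_of_nonneg fun i _ ↦ mul_nonneg (hx i).1 (hslack i)).1
      (by rw [← hdiff, hyx, sub_self]) i (Finset.mem_univ i)
  have hpos : ∀ i, y (v i) ≠ 1 → 0 < v.repr p i := fun i hi ↦
    lt_of_le_of_ne (le_of_not_gt fun hneg ↦
      mul_ne_zero ((hx i).2 hneg).ne' (sub_ne_zero.2 hi.symm) (hzero i)) (hv.repr_ne_zero hp i).symm
  obtain ⟨j, hj⟩ : ∃ j, y (v j) ≠ 1 := by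
    by_contra! hall
    exact hne (v.ext fun i ↦ by rw [hall, v.sumCoords_self_apply])
  rw [← sub_pos, hdiff]
  refine Finset.sum_pos' (fun i _ ↦ ?_) ⟨j, Finset.mem_univ j, mul_pos (hpos j hj)
    (lt_of_le_of_ne (hslack j) (sub_ne_zero.2 hj.symm).symm)⟩
  obtain hi | hi := eq_or_ne (y (v i)) 1
  · simp [hi]
  · exact mul_nonneg (hpos i hi).le (hslack i)

theorem IsSimplicialFacet.sumCoords_add_lt_or_lt {v' : Basis σ ℝ (σ → ℝ)}
    (hv : IsSimplicialFacet f v) (hv' : IsSimplicialFacet f v') (hp : IsGeneric f p)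
    {a q : σ →₀ ℕ} (ha : a ∈ f.support) (hav : v.sumCoords (toR a) < 1)
    (hq : toR q ∈ perturbedCone v p) :
    v'.sumCoords (toR (a + q)) < v.sumCoords (toR q) + 1 ∨
      v'.sumCoords (toR (a + q)) = v.sumCoords (toR q) + 1 ∧ v'.sumCoords p < v.sumCoords p := by
  have ha1 := hv'.sumCoords_le_one a ha
  have hqle := hv.apply_le_sumCoords hv'.sumCoords_le_one fun i ↦ (hq i).1
  rw [toR_add, map_add]
  obtain hlt | heq := (add_comm (v.sumCoords (toR q)) 1 ▸ add_le_add ha1 hqle).lt_or_eq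
  · exact .inl hlt
  refine .inr ⟨heq, hv.apply_lt_sumCoords hp hq hv'.sumCoords_le_one (by linarith) fun h ↦ ?_⟩
  rw [h] at heq
  linarith

open scoped Pointwise in
theorem IsSimplicialFacet.mem_sumCoords_smul (hv : IsSimplicialFacet f v)
    (hx : ∀ i, 0 ≤ v.repr x i) : x ∈ v.sumCoords x • newtonPolytope f := by
  cases nonempty_fintype σ
  have hsum := sumCoords_eq_sum_repr v x
  obtain h0 | hpos := (hsum ▸ Finset.sum_nonneg fun i _ ↦ hx i : 0 ≤ v.sumCoords x).eq_or_lt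
  · have hx0 : x = 0 := v.ext_elem fun i ↦ by
      rw [map_zero, Finsupp.zero_apply]
      exact (Finset.sum_eq_zero_iff_of_nonneg fun i _ ↦ hx i).1 (hsum ▸ h0.symm) i
        (Finset.mem_univ i)
    exact ⟨0, zero_mem_newtonPolytope, by simp [hx0]⟩
  · rw [Set.mem_smul_set_iff_inv_smul_mem₀ hpos.ne']
    have hcenter := (convex_convexHull ℝ _).centerMass_mem (fun i _ ↦ hx i) (hsum ▸ hpos)
      fun i _ ↦ (hv.exists_toR_eq i).elim fun a ha ↦ ha.2 ▸ toR_mem_newtonPolytope ha.1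
    rwa [Finset.centerMass, ← hsum, v.sum_repr] at hcenter

theorem IsSimplicialFacet.nu_eq_sumCoords (hv : IsSimplicialFacet f v)
    (hx : ∀ i, 0 ≤ v.repr x i) : nu f x = v.sumCoords x := by
  cases nonempty_fintype σ
  have hsum : 0 ≤ v.sumCoords x := by
    rw [sumCoords_eq_sum_repr]
    exact Finset.sum_nonneg fun i _ ↦ hx i
  refine (gauge_le_of_mem hsum (hv.mem_sumCoords_smul hx)).antisymm ?_
  obtain h0 | hpos := hsum.eq_or_lt
  · exact h0 ▸ gauge_nonneg x
  rw [gauge_def]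
  refine le_csInf ⟨_, hpos, hv.mem_sumCoords_smul hx⟩ ?_
  rintro r ⟨hr, z, hz, rfl⟩
  simpa using mul_le_of_le_one_right (le_of_lt hr)
    (le_one_of_mem_newtonPolytope hv.sumCoords_le_one hz)

end PerturbedCone

section LatticeCone

open Module

variable {σ : Type*} {v : Basis σ ℝ (σ → ℝ)} {d : ℕ}

/-- `d` is a common denominator of the coordinates of the lattice points in the basis `v`. -/
def IsCommonDenominator (v : Basis σ ℝ (σ → ℝ)) (d : ℕ) : Prop :=
  0 < d ∧ ∀ (m : σ →₀ ℕ) (i : σ), ∃ z : ℤ, (z : ℝ) = d * v.repr (toR m) i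

theorem exists_isCommonDenominator [Finite σ] (hv : ∀ i, ∃ a, toR a = v i) :
    ∃ d, IsCommonDenominator v d := by
  classical
  cases nonempty_fintype σ
  choose a ha using hv
  let M : Matrix σ σ ℤ := .of fun j i ↦ a i j
  have hMv : M.map (Int.castRingHom ℝ) = (Pi.basisFun ℝ σ).toMatrix v := by
    ext j i
    simp [M, Basis.toMatrix_apply, ← ha, toR]
  have hM : M.det ≠ 0 := fun h0 ↦ by
    have hunit := (Pi.basisFun ℝ σ).isUnit_det v
    rw [Basis.det_apply, ← hMv, ← RingHom.mapMatrix_apply, ← RingHom.map_det, h0, map_zero] at hunit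
    exact not_isUnit_zero hunit
  -- Cramer's rule: the coordinates of `m` multiplied by `det M` are integral.
  have hcramer : ∀ (m : σ →₀ ℕ) i, ((M.cramer (fun j ↦ m j) i : ℤ) : ℝ) =
      M.det * v.repr (toR m) i := fun m i ↦ by
    have hsum : ∑ k, ((M.cramer (fun j ↦ m j) k : ℤ) : ℝ) • v k = (M.det : ℝ) • toR m := by
      ext j
      have := congrFun (M.mulVec_cramer fun j ↦ (m j : ℤ)) j
      simpa [Matrix.mulVec, dotProduct, M, ← ha, toR, mul_comm] using
        congrArg (Int.cast : ℤ → ℝ) this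
    have := congrArg (v.repr · i) hsum
    simpa only [v.repr_sum_self, map_smul, Finsupp.smul_apply, smul_eq_mul] using this
  refine ⟨M.det.natAbs, Int.natAbs_pos.2 hM, fun m i ↦
    ⟨M.det.sign * M.cramer (fun j ↦ m j) i, ?_⟩⟩
  rw [Int.cast_mul, hcramer, ← mul_assoc, ← Int.cast_mul, Int.sign_mul_self_eq_natAbs,
    Int.cast_natCast]

/-- The lattice points of the cone spanned by `v`. -/
def latticeCone (v : Basis σ ℝ (σ → ℝ)) : AddSubmonoid (σ →₀ ℕ) where
  carrier := {m | ∀ i, 0 ≤ v.repr (toR m) i}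
  zero_mem' i := by
    have : toR (0 : σ →₀ ℕ) = 0 := by ext; simp [toR]
    simp [this]
  add_mem' ha hb i := by
    rw [toR_add, map_add, Finsupp.add_apply]
    exact add_nonneg (ha i) (hb i)

theorem monomial_eq_smul_monomial_one (k : σ →₀ ℕ) (c : ℂ) :
    monomial k c = c • (monomial k 1 : MvPolynomial σ ℂ) := by
  rw [smul_monomial, smul_eq_mul, mul_one]

variable [Fintype σ]

/-- The coordinates of the lattice point `m` in the basis `v`, scaled by `d`. They are natural
numbers when `d` is a common denominator and `m` lies in the cone spanned by `v`. -/
noncomputable def exponent (v : Basis σ ℝ (σ → ℝ)) (d : ℕ) (m : σ →₀ ℕ) : σ →₀ ℕ :=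
  Finsupp.equivFunOnFinite.symm fun i ↦ ⌊d * v.repr (toR m) i⌋₊

namespace IsCommonDenominator

variable {a b m : σ →₀ ℕ}

theorem natCast_exponent (hd : IsCommonDenominator v d) (hm : m ∈ latticeCone v) (i : σ) :
    (exponent v d m i : ℝ) = d * v.repr (toR m) i := by
  obtain ⟨z, hz⟩ := hd.2 m i
  have hz0 : 0 ≤ z := by
    rw [← Int.cast_nonneg_iff (R := ℝ), hz]
    exact mul_nonneg d.cast_nonneg (hm i)
  lift z to ℕ using hz0
  rw [Int.cast_natCast] at hz
  rw [exponent, Finsupp.equivFunOnFinite_symm_apply_apply, ← hz, Nat.floor_natCast]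

theorem exponent_add (hd : IsCommonDenominator v d) (ha : a ∈ latticeCone v)
    (hb : b ∈ latticeCone v) : exponent v d (a + b) = exponent v d a + exponent v d b := by
  ext i
  rw [← Nat.cast_inj (R := ℝ), hd.natCast_exponent (add_mem ha hb), toR_add, map_add,
    Finsupp.add_apply, Finsupp.add_apply, Nat.cast_add, hd.natCast_exponent ha,
    hd.natCast_exponent hb, mul_add]

theorem injective_exponent (hd : IsCommonDenominator v d) :
    Function.Injective fun q : latticeCone v ↦ exponent v d q := fun a b hab ↦ by
  have hrepr : toR (a : σ →₀ ℕ) = toR b := v.ext_elem fun i ↦ by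
    have := hd.natCast_exponent a.2 i
    rw [show exponent v d a = exponent v d b from hab, hd.natCast_exponent b.2] at this
    exact (mul_left_cancel₀ (Nat.cast_ne_zero.2 hd.1.ne') this).symm
  ext i
  simpa [toR] using congrFun hrepr i

theorem natCast_degree_exponent (hd : IsCommonDenominator v d) (hm : m ∈ latticeCone v) :
    ((exponent v d m).degree : ℝ) = d * v.sumCoords (toR m) := by
  simp_rw [Finsupp.degree_eq_sum, Nat.cast_sum, hd.natCast_exponent hm, ← Finset.mul_sum,
    sumCoords_eq_sum_repr]

theorem exists_add_eq_of_exponent_eq_add (hd : IsCommonDenominator v d) (hv : ∀ i, 0 ≤ v i)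
    {k : σ →₀ ℕ} (ha : a ∈ latticeCone v) (hm : m ∈ latticeCone v)
    (h : exponent v d m = exponent v d a + k) :
    ∃ q ∈ latticeCone v, exponent v d q = k ∧ a + q = m := by
  have hd0 : (0 : ℝ) < d := Nat.cast_pos.2 hd.1
  have hk : ∀ i, (k i : ℝ) = d * v.repr (toR m - toR a) i := fun i ↦ by
    have := hd.natCast_exponent hm i
    rw [h, Finsupp.add_apply, Nat.cast_add, hd.natCast_exponent ha] at this
    rw [map_sub, Finsupp.sub_apply]
    linarith
  have hnonneg : ∀ i, 0 ≤ v.repr (toR m - toR a) i := fun i ↦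
    nonneg_of_mul_nonneg_right (hk i ▸ (k i).cast_nonneg) hd0
  have hle : toR a ≤ toR m := by
    rw [← sub_nonneg, ← v.sum_repr (toR m - toR a)]
    exact Finset.sum_nonneg fun i _ ↦ smul_nonneg (hnonneg i) (hv i)
  obtain ⟨q, rfl⟩ := exists_add_of_le (show a ≤ m from fun i ↦ Nat.cast_le.1 (hle i))
  rw [toR_add, add_sub_cancel_left] at hnonneg hk
  refine ⟨q, hnonneg, ?_, rfl⟩
  ext i
  rw [← Nat.cast_inj (R := ℝ), hd.natCast_exponent hnonneg, hk]

end IsCommonDenominator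

/-- The linear map sending the monomial with exponent `exponent v d q` to the monomial with
exponent `q`, for `q` in the cone spanned by `v`, and every other monomial to zero. It is a
retraction of the embedding of the monoid algebra of the cone into a polynomial ring, and it is
linear over that algebra. -/
noncomputable def coneRetraction (v : Basis σ ℝ (σ → ℝ)) (d : ℕ) :
    MvPolynomial σ ℂ →ₗ[ℂ] MvPolynomial σ ℂ :=
  (basisMonomials σ ℂ).constr ℂ <|
    Function.extend (fun q : latticeCone v ↦ exponent v d q) (fun q ↦ monomial q 1) 0

theorem coneRetraction_monomial (k : σ →₀ ℕ) (c : ℂ) : coneRetraction v d (monomial k c) =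
    c • Function.extend (fun q : latticeCone v ↦ exponent v d q) (fun q ↦ monomial q 1) 0 k := by
  rw [monomial_eq_smul_monomial_one, map_smul]
  exact congrArg (c • ·) ((basisMonomials σ ℂ).constr_basis ℂ _ k)

namespace IsCommonDenominator

theorem coneRetraction_monomial_exponent (hd : IsCommonDenominator v d) {q : σ →₀ ℕ}
    (hq : q ∈ latticeCone v) (c : ℂ) :
    coneRetraction v d (monomial (exponent v d q) c) = monomial q c := by
  rw [coneRetraction_monomial, hd.injective_exponent.extend_apply _ _ ⟨q, hq⟩,
    ← monomial_eq_smul_monomial_one]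

theorem coneRetraction_monomial_exponent_mul (hd : IsCommonDenominator v d) (hv : ∀ i, 0 ≤ v i)
    {a : σ →₀ ℕ} (ha : a ∈ latticeCone v) (c : ℂ) (H : MvPolynomial σ ℂ) :
    coneRetraction v d (monomial (exponent v d a) c * H) =
      monomial a c * coneRetraction v d H := by
  induction H using MvPolynomial.induction_on' with
  | add H₁ H₂ h₁ h₂ => rw [mul_add, map_add, h₁, h₂, map_add, mul_add]
  | monomial k b =>
    by_cases hk : ∃ q ∈ latticeCone v, exponent v d q = k
    · obtain ⟨q, hq, rfl⟩ := hk
      rw [monomial_mul, ← hd.exponent_add ha hq,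
        hd.coneRetraction_monomial_exponent (add_mem ha hq),
        hd.coneRetraction_monomial_exponent hq, monomial_mul]
    · have hak : ¬ ∃ q : latticeCone v, exponent v d q = exponent v d a + k := fun ⟨q', h⟩ ↦ by
        obtain ⟨q, hq, hqk, -⟩ := hd.exists_add_eq_of_exponent_eq_add hv ha q'.2 h
        exact hk ⟨q, hq, hqk⟩
      rw [monomial_mul, coneRetraction_monomial, coneRetraction_monomial,
        Function.extend_apply' _ _ _ hak, Function.extend_apply' _ _ _ (by simpa using hk)]
      simp

end IsCommonDenominator

theorem coneRetraction_mem {N : Submodule ℂ (MvPolynomial σ ℂ)} {H : MvPolynomial σ ℂ}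
    (hN : ∀ q ∈ latticeCone v, exponent v d q ∈ H.support → monomial q 1 ∈ N) :
    coneRetraction v d H ∈ N := by
  classical
  rw [H.as_sum, map_sum]
  refine N.sum_mem fun k hk ↦ ?_
  rw [coneRetraction_monomial]
  refine N.smul_mem _ ?_
  by_cases h : ∃ q : latticeCone v, exponent v d q = k
  · rw [Function.extend_def, dif_pos h]
    refine hN _ h.choose.2 ?_
    have hspec := h.choose_spec
    exact hspec.symm ▸ hk
  · rw [Function.extend_apply' _ _ _ h]
    exact N.zero_mem

end LatticeCone

section LocalForms

open Filter Topology

section ToricDerivatives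

variable {σ : Type*} {f : MvPolynomial σ ℂ}

theorem coeff_X_mul_pderiv (f : MvPolynomial σ ℂ) (j : σ) (m : σ →₀ ℕ) :
    coeff m (X j * pderiv j f) = m j * coeff m f := by
  classical
  induction f using MvPolynomial.induction_on' with
  | add p q hp hq => rw [map_add, mul_add, coeff_add, hp, hq, coeff_add, mul_add]
  | monomial k b =>
    rw [X_mul_pderiv_monomial, coeff_smul, coeff_monomial]
    split_ifs with h <;> simp [h]

/-- The derivative of `f` along the vector field `∑ j, y (e j) • u j ∂/∂u j` on the torus, which
scales the monomial `u ^ a` by `y a`. -/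
noncomputable def toricDeriv (y : (σ → ℝ) →ₗ[ℝ] ℝ) (f : MvPolynomial σ ℂ) : MvPolynomial σ ℂ :=
  ∑ a ∈ f.support, monomial a (y (toR a) * coeff a f)

theorem toricDeriv_mem_LIdeal [Finite σ] (y : (σ → ℝ) →ₗ[ℝ] ℝ) :
    toricDeriv y f ∈ LIdeal f := by
  classical
  cases nonempty_fintype σ
  have hsum : toricDeriv y f = ∑ j, C (y (Pi.single j 1) : ℂ) * (X j * pderiv j f) := by
    ext m
    have hm : y (toR m) = ∑ j, m j * y (Pi.single j 1) := by
      simpa [toR] using apply_eq_sum_repr_mul (Pi.basisFun ℝ σ) y (toR m)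
    simp only [toricDeriv, coeff_sum, coeff_monomial, Finset.sum_ite_eq', coeff_C_mul,
      coeff_X_mul_pderiv]
    split_ifs with hmf
    · rw [hm, Complex.ofReal_sum, Finset.sum_mul]
      refine Finset.sum_congr rfl fun j _ ↦ ?_
      push_cast
      ring
    · simp only [notMem_support_iff.1 hmf, mul_zero, Finset.sum_const_zero]
  rw [hsum]
  exact Ideal.sum_mem _ fun j _ ↦ Ideal.mul_mem_left _ _ (Ideal.subset_span ⟨j, rfl⟩)

open Classical in
theorem eval_faceRestrict_X_mul_pderiv [Fintype σ] (Δ : Set (σ → ℝ)) (t : σ → ℂ) (j : σ) :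
    eval t (faceRestrict Δ (X j * pderiv j f)) =
      ∑ a ∈ f.support, if toR a ∈ Δ then a j * coeff a f * ∏ i, t i ^ a i else 0 := by
  have hsub : (X j * pderiv j f).support ⊆ f.support := fun m hm ↦ by
    rw [mem_support_iff, coeff_X_mul_pderiv] at hm
    exact mem_support_iff.2 (right_ne_zero_of_mul hm)
  rw [faceRestrict, map_sum, Finset.sum_subset hsub fun m _ hm ↦ by
    simp [notMem_support_iff.1 hm]]
  refine Finset.sum_congr rfl fun a _ ↦ ?_
  split_ifs
  · rw [eval_monomial, coeff_X_mul_pderiv, Finsupp.prod_fintype _ _ fun _ ↦ pow_zero _]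
  · exact map_zero _

end ToricDerivatives

theorem zpow_sum₀ {ι G : Type*} [CommGroupWithZero G] {u : G} (hu : u ≠ 0) (s : Finset ι)
    (z : ι → ℤ) : u ^ ∑ i ∈ s, z i = ∏ i ∈ s, u ^ z i := by
  classical
  induction s using Finset.induction_on with
  | empty => simp
  | insert i s hi ih => rw [Finset.sum_insert hi, Finset.prod_insert hi, zpow_add₀ hu, ih]

variable {σ : Type*} {f : MvPolynomial σ ℂ} {v : Module.Basis σ ℝ (σ → ℝ)} {d : ℕ}

theorem IsSimplicialFacet.exists_nbFace (hv : IsSimplicialFacet f v) {Z : Finset σ} {i₀ : σ}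
    (hi₀ : i₀ ∉ Z) : ∃ Δ, NBFace f Δ ∧ ∀ a ∈ f.support,
      (toR a ∈ Δ ↔ v.sumCoords (toR a) = 1 ∧ ∀ i ∈ Z, v.repr (toR a) i = 0) := by
  let z : (σ → ℝ) →ₗ[ℝ] ℝ := ∑ i ∈ Z, v.coord i
  have hz : ∀ x, z x = ∑ i ∈ Z, v.repr x i := fun x ↦ by simp [z]
  have htilt : ∀ a ∈ f.support, ∀ᶠ δ : ℝ in 𝓝[>] 0, (v.sumCoords - δ • z) (toR a) ≤ 1 ∧
      ((v.sumCoords - δ • z) (toR a) = 1 ↔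
        v.sumCoords (toR a) = 1 ∧ ∀ i ∈ Z, v.repr (toR a) i = 0) := fun a ha ↦ by
    simp only [LinearMap.sub_apply, LinearMap.smul_apply, smul_eq_mul]
    obtain h1 | hlt := (hv.sumCoords_le_one a ha).eq_or_lt'
    · have hrepr := hv.repr_nonneg a ha h1.symm
      have hz0 : 0 ≤ z (toR a) := hz (toR a) ▸ Finset.sum_nonneg fun i _ ↦ hrepr i
      rw [← Finset.sum_eq_zero_iff_of_nonneg fun i _ ↦ hrepr i, ← hz, ← h1]
      filter_upwards [self_mem_nhdsWithin] with δ hδ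
      have hδ0 : δ ≠ 0 := ne_of_gt hδ
      simpa [hδ0] using mul_nonneg (le_of_lt hδ) hz0
    · have hlim : ∀ᶠ δ : ℝ in 𝓝[>] 0, v.sumCoords (toR a) - δ * z (toR a) < 1 :=
        nhdsWithin_le_nhds <|
          ContinuousAt.eventually_lt (by fun_prop) continuousAt_const (by rwa [zero_mul, sub_zero])
      exact hlim.mono fun δ hδ ↦ ⟨hδ.le, iff_of_false hδ.ne fun h ↦ hlt.ne h.1⟩
  obtain ⟨δ, hδ⟩ := ((Finset.eventually_all f.support).2 htilt).exists
  obtain ⟨a, ha, hai⟩ := hv.exists_toR_eq i₀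
  refine ⟨_, nbFace_of_le_one (y := v.sumCoords - δ • z)
    (fun x ↦ le_one_of_mem_newtonPolytope fun a ha ↦ (hδ a ha).1)
    (toR_mem_newtonPolytope ha) ((hδ a ha).2.2 ?_), fun a ha ↦ ?_⟩
  · refine ⟨by rw [hai, v.sumCoords_self_apply], fun i hi ↦ ?_⟩
    rw [hai, v.repr_self, Finsupp.single_eq_of_ne (ne_of_mem_of_not_mem hi hi₀)]
  · rw [← (hδ a ha).2]
    exact and_iff_right (toR_mem_newtonPolytope ha)

variable [Fintype σ]

theorem IsCommonDenominator.exists_torus_point (hd : IsCommonDenominator v d) {u : σ → ℂ}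
    (hu : ∀ i, u i ≠ 0) : ∃ t : σ → ℂ, (∀ j, t j ≠ 0) ∧
      ∀ a ∈ latticeCone v, ∏ j, t j ^ a j = ∏ i, u i ^ exponent v d a i := by
  classical
  choose z hz using fun j i ↦ hd.2 (Finsupp.single j 1) i
  refine ⟨fun j ↦ ∏ i, u i ^ z j i,
    fun j ↦ Finset.prod_ne_zero_iff.2 fun i _ ↦ zpow_ne_zero _ (hu i), fun a ha ↦ ?_⟩
  have hexp : ∀ i, (exponent v d a i : ℤ) = ∑ j, z j i * a j := fun i ↦ by
    rw [← Int.cast_inj (α := ℝ), Int.cast_natCast, hd.natCast_exponent ha, Int.cast_sum]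
    simp_rw [Int.cast_mul, hz, toR_single, Nat.cast_one, one_smul, Int.cast_natCast]
    have := apply_eq_sum_repr_mul (Pi.basisFun ℝ σ) (v.coord i) (toR a)
    simp only [Pi.basisFun_repr, Pi.basisFun_apply, Module.Basis.coord_apply] at this
    rw [this, Finset.mul_sum]
    exact Finset.sum_congr rfl fun j _ ↦ by rw [toR]; ring
  simp_rw [← Finset.prod_pow]
  rw [Finset.prod_comm]
  refine Finset.prod_congr rfl fun i _ ↦ ?_
  simp_rw [← zpow_natCast, hexp, zpow_sum₀ (hu i), zpow_mul]

theorem IsCommonDenominator.exponent_apply_eq_zero (hd : IsCommonDenominator v d) {a : σ →₀ ℕ}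
    (ha : a ∈ latticeCone v) {i : σ} : exponent v d a i = 0 ↔ v.repr (toR a) i = 0 := by
  rw [← Nat.cast_eq_zero (R := ℝ), hd.natCast_exponent ha, mul_eq_zero,
    or_iff_right (Nat.cast_ne_zero.2 hd.1.ne')]

theorem prod_pow_eq_ite {K : Type*} [Field K] [DecidableEq K] (w : σ → K) (k : σ → ℕ) :
    ∏ i, w i ^ k i =
      if ∀ i, w i = 0 → k i = 0 then ∏ i, (if w i = 0 then 1 else w i) ^ k i else 0 := by
  split_ifs with h
  · refine Finset.prod_congr rfl fun i _ ↦ ?_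
    split_ifs with hi
    · simp [h i hi]
    · rfl
  · push Not at h
    obtain ⟨i, hi, hki⟩ := h
    exact Finset.prod_eq_zero (Finset.mem_univ i) (by rw [hi, zero_pow hki])

/-- The component of `toricDeriv (v.coord i) f` on the facet with vertices `v`, written in the
coordinates `exponent v d` of its cone. -/
noncomputable def localForm (f : MvPolynomial σ ℂ) (v : Module.Basis σ ℝ (σ → ℝ)) (d : ℕ) (i : σ) :
    MvPolynomial σ ℂ :=
  ∑ a ∈ f.support with v.sumCoords (toR a) = 1,
    monomial (exponent v d a) (v.repr (toR a) i * coeff a f)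

namespace IsCommonDenominator

theorem isHomogeneous_localForm (hd : IsCommonDenominator v d) (hv : IsSimplicialFacet f v)
    (i : σ) : (localForm f v d i).IsHomogeneous d := by
  refine IsHomogeneous.sum _ _ _ fun a ha ↦ isHomogeneous_monomial _ ?_
  rw [Finset.mem_filter] at ha
  rw [← Nat.cast_inj (R := ℝ), hd.natCast_degree_exponent (hv.repr_nonneg a ha.1 ha.2), ha.2,
    mul_one]

/-- A zero `w` of the local forms gives a point of the torus that violates nondegeneracy on the face
of the facet whose vertices correspond to the nonzero coordinates of `w`. -/
theorem eq_zero_of_eval_localForm_eq_zero (hd : IsCommonDenominator v d)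
    (hv : IsSimplicialFacet f v) (hnd : Nondegenerate f) {w : σ → ℂ}
    (hw : ∀ i, eval w (localForm f v d i) = 0) : w = 0 := by
  classical
  by_contra hne
  obtain ⟨i₀, hi₀⟩ := Function.ne_iff.1 hne
  obtain ⟨Δ, hΔ, hmem⟩ := hv.exists_nbFace (Z := {i | w i = 0}) (i₀ := i₀) (by simpa using hi₀)
  let u : σ → ℂ := fun i ↦ if w i = 0 then 1 else w i
  obtain ⟨t, ht0, ht⟩ := hd.exists_torus_point (u := u) fun i ↦ by
    by_cases hi : w i = 0 <;> simp [u, hi]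
  have hterm : ∀ a ∈ f.support, v.sumCoords (toR a) = 1 →
      (if toR a ∈ Δ then ∏ i, t i ^ a i else 0) = ∏ i, w i ^ exponent v d a i := fun a ha h1 ↦ by
    have hcone : a ∈ latticeCone v := hv.repr_nonneg a ha h1
    simp only [hmem a ha, h1, true_and, Finset.mem_filter, Finset.mem_univ,
      ← hd.exponent_apply_eq_zero hcone, ht a hcone]
    exact (prod_pow_eq_ite w _).symm
  refine hnd Δ hΔ ⟨t, ht0, fun j ↦ ?_⟩
  have hcoord : ∀ a : σ →₀ ℕ, (a j : ℂ) = ∑ i, (v i j : ℂ) * v.repr (toR a) i := fun a ↦ by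
    have := apply_eq_sum_repr_mul v (LinearMap.proj j) (toR a)
    simp only [LinearMap.proj_apply, toR, mul_comm (v.repr _ _)] at this
    exact_mod_cast congrArg Complex.ofReal this
  calc eval t (faceRestrict Δ (X j * pderiv j f))
      = ∑ a ∈ f.support with v.sumCoords (toR a) = 1,
          a j * coeff a f * ∏ i, w i ^ exponent v d a i := by
        rw [eval_faceRestrict_X_mul_pderiv, Finset.sum_filter]
        refine Finset.sum_congr rfl fun a ha ↦ ?_
        split_ifs with h h1 h1
        · rw [← hterm a ha h1, if_pos h]
        · exact absurd ((hmem a ha).1 h).1 h1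
        · rw [← hterm a ha h1, if_neg h, mul_zero]
        · rfl
    _ = ∑ i, (v i j : ℂ) * eval w (localForm f v d i) := by
        simp_rw [localForm, map_sum, eval_monomial, Finset.mul_sum, hcoord, Finset.sum_mul]
        rw [Finset.sum_comm]
        refine Finset.sum_congr rfl fun i _ ↦ Finset.sum_congr rfl fun a _ ↦ ?_
        rw [Finsupp.prod_fintype _ _ fun _ ↦ pow_zero _]
        ring
    _ = 0 := Finset.sum_eq_zero fun i _ ↦ by rw [hw, mul_zero]

end IsCommonDenominator

end LocalForms

section Reduction

variable {σ : Type*} [Fintype σ] {f : MvPolynomial σ ℂ} {v : Module.Basis σ ℝ (σ → ℝ)} {d : ℕ}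

namespace IsCommonDenominator

theorem coneRetraction_localForm_mul (hd : IsCommonDenominator v d) (hv : IsSimplicialFacet f v)
    (i : σ) (H : MvPolynomial σ ℂ) :
    coneRetraction v d (localForm f v d i * H) =
      (∑ a ∈ f.support with v.sumCoords (toR a) = 1, monomial a (v.repr (toR a) i * coeff a f)) *
        coneRetraction v d H := by
  rw [localForm, Finset.sum_mul, Finset.sum_mul, map_sum]
  refine Finset.sum_congr rfl fun a ha ↦ ?_
  rw [Finset.mem_filter] at ha
  exact hd.coneRetraction_monomial_exponent_mul hv.nonneg (hv.repr_nonneg a ha.1 ha.2) _ _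

/-- Modulo `ℒ` the terms of `toricDeriv (v.coord i) f` on the facet can be traded for those
below it. -/
theorem coneRetraction_localForm_mul_mem (hd : IsCommonDenominator v d)
    (hv : IsSimplicialFacet f v) {N : Submodule ℂ (MvPolynomial σ ℂ)}
    (hL : (LIdeal f).restrictScalars ℂ ≤ N) {i : σ} {H : MvPolynomial σ ℂ}
    (hN : ∀ a ∈ f.support, v.sumCoords (toR a) < 1 → ∀ q ∈ latticeCone v,
      exponent v d q ∈ H.support → monomial (a + q) 1 ∈ N) :
    coneRetraction v d (localForm f v d i * H) ∈ N := by
  have hsplit : ∑ a ∈ f.support with v.sumCoords (toR a) = 1,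
        monomial a (v.repr (toR a) i * coeff a f : ℂ) =
      toricDeriv (v.coord i) f - ∑ a ∈ f.support with ¬ v.sumCoords (toR a) = 1,
        monomial a (v.repr (toR a) i * coeff a f : ℂ) :=
    eq_sub_of_add_eq (Finset.sum_filter_add_sum_filter_not _ _ _)
  have hderiv : toricDeriv (v.coord i) f * coneRetraction v d H ∈ N :=
    hL (Ideal.mul_mem_right _ _ (toricDeriv_mem_LIdeal _))
  rw [hd.coneRetraction_localForm_mul hv, hsplit, sub_mul, Finset.sum_mul]
  refine N.sub_mem hderiv <| N.sum_mem fun a ha ↦ ?_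
  rw [Finset.mem_filter] at ha
  rw [monomial_eq_smul_monomial_one, smul_mul_assoc]
  refine N.smul_mem _ <| coneRetraction_mem (N := N.comap (LinearMap.mulLeft ℂ (monomial a 1)))
    fun q hq hqH ↦ ?_
  rw [Submodule.mem_comap, LinearMap.mulLeft_apply, monomial_mul, mul_one]
  exact hN a ha.1 ((hv.sumCoords_le_one a ha.1).lt_of_ne ha.2) q hq hqH

theorem exists_monomial_eq_sum_localForm_mul [Nonempty σ] (hd : IsCommonDenominator v d)
    (hv : IsSimplicialFacet f v) (hnd : Nondegenerate f) {ρ k : σ →₀ ℕ} (hρ : ρ ≤ k)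
    (hk : Fintype.card σ * d + ρ.degree < Fintype.card σ + k.degree) :
    ∃ H : σ → MvPolynomial σ ℂ, monomial k 1 = ∑ i, localForm f v d i * H i ∧
      ∀ i, ∀ l ∈ (H i).support, ρ ≤ l ∧ d + l.degree = k.degree := by
  obtain ⟨k, rfl⟩ := exists_add_of_le hρ
  have hcard : Fintype.card σ + d ≤ Fintype.card σ * d + 1 := by
    nlinarith [hd.1, Fintype.card_pos (α := σ)]
  rw [map_add] at hk
  obtain ⟨e, he⟩ := exists_add_of_le (show d ≤ k.degree by omega)
  obtain ⟨h, hh, hsum⟩ := exists_eq_sum_mul_of_isHomogeneous hd.1 (hd.isHomogeneous_localForm hv)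
    (fun w ↦ hd.eq_zero_of_eval_localForm_eq_zero hv hnd) (e := e) (by omega)
    (isHomogeneous_monomial (1 : ℂ) he)
  refine ⟨fun i ↦ monomial ρ 1 * h i, ?_, fun i l hl ↦ ?_⟩
  · simp_rw [mul_left_comm _ (monomial ρ (1 : ℂ)), ← Finset.mul_sum, ← hsum, monomial_mul, mul_one]
  · obtain ⟨l, hl', rfl⟩ : ∃ l' ∈ (h i).support, ρ + l' = l := by
      classical
      simpa [Finset.mem_add, support_monomial] using support_mul _ _ hl
    have hle : l.degree = e := by_contra fun h ↦ mem_support_iff.1 hl' ((hh i).coeff_eq_zero h)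
    rw [map_add, map_add, he, hle]
    exact ⟨le_self_add, by omega⟩

end IsCommonDenominator

variable {p : σ → ℝ}

/-- The indicator function of the coordinates in which `p` is negative. A point of the cone spanned
by `v` lies in `perturbedCone v p` exactly when these coordinates are positive there. -/
noncomputable def negIndicator (v : Module.Basis σ ℝ (σ → ℝ)) (p : σ → ℝ) : σ →₀ ℕ :=
  Finsupp.equivFunOnFinite.symm ({i | v.repr p i < 0}.indicator 1)

theorem IsCommonDenominator.toR_mem_perturbedCone (hd : IsCommonDenominator v d) {q : σ →₀ ℕ} :
    toR q ∈ perturbedCone v p ↔ q ∈ latticeCone v ∧ negIndicator v p ≤ exponent v d q := by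
  classical
  rw [perturbedCone, Set.mem_ofPred_eq, forall_and]
  refine and_congr_right fun hq ↦ forall_congr' fun i ↦ ?_
  have hpos : 0 < v.repr (toR q) i ↔ 1 ≤ exponent v d q i := by
    rw [Nat.one_le_iff_ne_zero, Ne, hd.exponent_apply_eq_zero hq, (hq i).lt_iff_ne', Ne]
  rw [hpos]
  by_cases hi : v.repr p i < 0 <;> simp [negIndicator, hi]

theorem degree_negIndicator_lt [Nonempty σ] (hv : ∀ i, 0 ≤ v i) (hp : ∀ i, 0 < p i) :
    (negIndicator v p).degree < Fintype.card σ := by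
  classical
  obtain ⟨i, hi⟩ : ∃ i, 0 ≤ v.repr p i := by
    by_contra! h
    obtain ⟨j⟩ := ‹Nonempty σ›
    refine (hp j).not_ge ?_
    rw [← v.sum_repr p, Finset.sum_apply]
    exact Finset.sum_nonpos fun i _ ↦ mul_nonpos_of_nonpos_of_nonneg (h i).le (hv i j)
  rw [Finsupp.degree_eq_sum, Fintype.card_eq_sum_ones]
  refine Finset.sum_lt_sum (fun i _ ↦ ?_) ⟨i, Finset.mem_univ i, ?_⟩
  · exact Set.indicator_apply_le' (fun _ ↦ le_rfl) fun _ ↦ zero_le_one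
  · simp [negIndicator, hi]

theorem IsSimplicialFacet.monomial_mem_of_card_le_sumCoords [Nonempty σ]
    (hv : IsSimplicialFacet f v) (hnd : Nondegenerate f) (hp : ∀ i, 0 < p i)
    {N : Submodule ℂ (MvPolynomial σ ℂ)} (hL : (LIdeal f).restrictScalars ℂ ≤ N) {m : σ →₀ ℕ}
    (hm : toR m ∈ perturbedCone v p) (hcard : Fintype.card σ ≤ v.sumCoords (toR m))
    (hN : ∀ a ∈ f.support, v.sumCoords (toR a) < 1 → ∀ q, toR q ∈ perturbedCone v p →
      v.sumCoords (toR q) + 1 = v.sumCoords (toR m) → monomial (a + q) 1 ∈ N) :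
    monomial m 1 ∈ N := by
  obtain ⟨d, hd⟩ := exists_isCommonDenominator fun i ↦ (hv.exists_toR_eq i).imp fun a ha ↦ ha.2
  obtain ⟨hmv, hle⟩ := hd.toR_mem_perturbedCone.1 hm
  have hd0 : (0 : ℝ) < d := Nat.cast_pos.2 hd.1
  have hdeg : Fintype.card σ * d ≤ (exponent v d m).degree := by
    rw [← Nat.cast_le (α := ℝ), hd.natCast_degree_exponent hmv, Nat.cast_mul, mul_comm]
    exact mul_le_mul_of_nonneg_left hcard hd0.le
  have hρ := degree_negIndicator_lt hv.nonneg hp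
  obtain ⟨H, hH, hsupp⟩ :=
    hd.exists_monomial_eq_sum_localForm_mul hv hnd hle (by omega)
  rw [← hd.coneRetraction_monomial_exponent hmv, hH, map_sum]
  refine N.sum_mem fun i _ ↦ hd.coneRetraction_localForm_mul_mem hv hL fun a ha ha1 q hq hqH ↦ ?_
  obtain ⟨hρq, hqdeg⟩ := hsupp i _ hqH
  refine hN a ha ha1 q (hd.toR_mem_perturbedCone.2 ⟨hq, hρq⟩) (mul_left_cancel₀ hd0.ne' ?_)
  rw [mul_add, ← hd.natCast_degree_exponent hq, ← hd.natCast_degree_exponent hmv, ← hqdeg]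
  push_cast
  ring

end Reduction

section Spectrum

variable {σ : Type*} [DecidableEq σ] {f : MvPolynomial σ ℂ} {α : ℝ}

theorem monomial_mem_Nlt {m : σ →₀ ℕ} (hm : nu f (toR m) < α) : monomial m 1 ∈ Nlt f α :=
  fun k hk ↦ by rwa [Finset.mem_singleton.1 (support_monomial_subset hk)]

variable [Fintype σ] [Nonempty σ]

theorem monomial_mem_of_nu_eq (hf : Convenient f) (hnd : Nondegenerate f)
    (hsimp : ∀ Δ, NBFace f Δ → IsSimplex Δ) (hα : Fintype.card σ ≤ α) {m : σ →₀ ℕ}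
    (hm : nu f (toR m) = α) : monomial m 1 ∈ Nlt f α ⊔ (LIdeal f).restrictScalars ℂ := by
  obtain ⟨p, hp, hgen⟩ := exists_isGeneric_of_pos f
  have hcover : ∀ m, ∃ v, IsSimplicialFacet f v ∧ toR m ∈ perturbedCone v p := fun m ↦
    exists_mem_perturbedCone hf hsimp hp hgen fun i ↦ (m i).cast_nonneg
  have hwf : {v | IsSimplicialFacet f v}.WellFoundedOn
      (Function.onFun (· < ·) fun v ↦ v.sumCoords p) :=
    Set.wellFoundedOn_image.1 (finite_setOf_isSimplicialFacet.image _).wellFoundedOn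
  obtain ⟨v, hv, hmv⟩ := hcover m
  refine hwf.induction (P := fun v ↦ ∀ m, toR m ∈ perturbedCone v p → nu f (toR m) = α →
    monomial m 1 ∈ Nlt f α ⊔ (LIdeal f).restrictScalars ℂ) hv (fun v hv ih m hmv hm ↦ ?_) m hmv hm
  rw [hv.nu_eq_sumCoords fun i ↦ (hmv i).1] at hm
  refine hv.monomial_mem_of_card_le_sumCoords hnd hp le_sup_right hmv (hm ▸ hα)
    fun a ha hav q hq hqm ↦ ?_
  obtain ⟨v', hv', hmv'⟩ := hcover (a + q)
  have hnu := hv'.nu_eq_sumCoords fun i ↦ (hmv' i).1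
  obtain hlt | ⟨heq, hlt⟩ := hv.sumCoords_add_lt_or_lt hv' hgen ha hav hq
  · exact Submodule.mem_sup_left (monomial_mem_Nlt (by rwa [hnu, ← hm, ← hqm]))
  · exact ih v' hv' hlt _ hmv' (by rw [hnu, heq, hqm, hm])

end Spectrum

end ToricNewton

open ToricNewton in
theorem toric_newton_spectrum_in_Ico_general {σ : Type*} [Fintype σ] [DecidableEq σ] [Nonempty σ]
    {f : MvPolynomial σ ℂ} (hf : Convenient f) (hnd : Nondegenerate f)
    (hsimp : ∀ Δ, NBFace f Δ → IsSimplex Δ) {α : ℝ} (hα : Fintype.card σ ≤ α) :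
    grN f α = ⊥ := by
  rw [grN, ← le_bot_iff, Submodule.map_le_iff_le_comap, Submodule.comap_bot, Submodule.ker_mkQ]
  refine sup_le (fun g hg ↦ ?_) le_sup_right
  rw [g.as_sum]
  refine Submodule.sum_mem _ fun m hm ↦ ?_
  rw [monomial_eq_smul_monomial_one]
  refine Submodule.smul_mem _ _ ?_
  obtain hlt | heq := (hg m hm).lt_or_eq
  · exact Submodule.mem_sup_left (monomial_mem_Nlt hlt)
  · exact monomial_mem_of_nu_eq hf hnd hsimp hα heq

open ToricNewton in
/-- if the Newton polytope is simplicial (every proper face is a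
simplex), then the toric Newton spectrum is contained in `[0, n)`. -/
theorem toric_newton_spectrum_in_Ico {n : ℕ} (hn : 1 ≤ n) (f : MvPolynomial (Fin n) ℂ)
    (hconv : Convenient f) (hnd : Nondegenerate f)
    (hsimp : ∀ Δ : Set (Fin n → ℝ), IsFace (newtonPolytope f) Δ →
      Δ ≠ newtonPolytope f → IsSimplex Δ) :
    ∀ α : ℚ, (n : ℚ) ≤ α → grN f (α : ℝ) = ⊥ := by
  have : Nonempty (Fin n) := ⟨⟨0, hn⟩⟩
  exact fun α hα ↦ toric_newton_spectrum_in_Ico_general hconv hnd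
    (fun Δ hΔ ↦ hsimp Δ hΔ.1 fun h ↦ hΔ.2 (h ▸ zero_mem_newtonPolytope))
    (by rw [Fintype.card_fin]; exact_mod_cast hα)
end

section
/- Let f ∈ ℬ be convenient and Newton nondegenerate. Then for every α ∈ ℚ with α < 1 one has dim_ℂ gr^𝒩_α(ℬ/ℒ) = card{v ∈ ℕⁿ : ν(v) = α}. -/
open MvPolynomial

/-!
Write `Fᵢ = uᵢ ∂f/∂uᵢ` and let `M` be the span of `1, F₁, …, Fₙ`. Integral dependence on a power of
`M` is tested by valuations, whose value groups embed in ordered real vector spaces `H` by Hahn's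
theorem. The values of the variables then define a linear map `φ : ℝⁿ → H`. If its maximum on
`supp f` is positive, it is attained exactly on a face `Δ` of the Newton boundary; by nondegeneracy
and the Nullstellensatz the homogeneous polynomials `(Fᵢ)_Δ` generate an ideal containing a
monomial, so they cannot all have smaller value than their monomials. Hence `φ` is bounded on the
Newton polytope by the largest value of `1, F₁, …, Fₙ`, and `g ^ d` is integral over `M ^ a`
whenever `ν < a / d` on the support of `g`.

With `d = 1` this makes `ℬ` finite over `ℂ[F₁, …, Fₙ]`, so the `Fᵢ` are algebraically independent.
With `a < d` and `g ∈ ℒ`, the powers of `g ^ d ∈ ℒ ^ d` vanish along `F = 0` to an order exceeding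
their degree in `F`, whence `g = 0`. Thus for `α < 1` no nonzero element of `𝒩_α ℬ` lies in `ℒ`, and
the monomials with `ν = α` form a basis of the graded piece.
-/

namespace NewtonSpectrum

universe u

open scoped WithZero

section OrderedRealSpaces

theorem exists_linearForm_neg_of_neg {E H : Type*} [NormedAddCommGroup E] [NormedSpace ℝ E]
    [FiniteDimensional ℝ E] [AddCommGroup H] [LinearOrder H] [IsOrderedAddMonoid H] [Module ℝ H]
    [PosSMulStrictMono ℝ H] (φ : E →ₗ[ℝ] H) {s : Set E} (hs : s.Finite) :
    ∃ l : E →ₗ[ℝ] ℝ, (∀ x, φ x = 0 → l x = 0) ∧ ∀ x ∈ s, φ x < 0 → l x < 0 := by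
  set K := convexHull ℝ (s ∩ {x | φ x < 0})
  have hK : K ⊆ φ ⁻¹' Set.Iio 0 :=
    convexHull_min Set.inter_subset_right ((convex_Iio (𝕜 := ℝ) (0 : H)).linear_preimage φ)
  have hdisj : Disjoint K (LinearMap.ker φ : Set E) :=
    Set.disjoint_left.2 fun x hx hx' ↦ (hK hx).ne hx'
  obtain ⟨l, u, v, hlK, huv, hlker⟩ := geometric_hahn_banach_compact_closed
    (convex_convexHull ℝ _) ((hs.inter_of_left _).isCompact_convexHull (𝕜 := ℝ))
    (Submodule.convex _) (LinearMap.ker φ).closed_of_finiteDimensional hdisj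
  have hv : v < 0 := by simpa using hlker 0 (zero_mem _)
  refine ⟨l.toLinearMap, fun x hx ↦ ?_, fun x hxs hx ↦ ?_⟩
  · by_contra hne
    replace hne : l x ≠ 0 := hne
    have hscaled := hlker _ ((LinearMap.ker φ).smul_mem (v / l x) hx)
    rw [map_smul, smul_eq_mul, div_mul_cancel₀ _ hne] at hscaled
    exact hscaled.false
  · exact (hlK _ (subset_convexHull ℝ _ ⟨hxs, hx⟩)).trans (huv.trans hv)

instance lexHahnSeries_posSMulStrictMono (G : Type*) [LinearOrder G] :
    PosSMulStrictMono ℝ (Lex (HahnSeries G ℝ)) where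
  smul_lt_smul_of_pos_left c hc x y hxy := by
    obtain ⟨i, heq, hlt⟩ := (HahnSeries.lt_iff x y).1 hxy
    exact (HahnSeries.lt_iff _ _).2
      ⟨i, fun j hj ↦ congrArg (c * ·) (heq j hj), mul_lt_mul_of_pos_left hlt hc⟩

theorem exists_strictMono_withZero_realSpace (Γ : Type*) [LinearOrderedCommGroupWithZero Γ] :
    ∃ ψ : Γ →*₀ (Lex (HahnSeries (FiniteArchimedeanClass (Additive Γˣ)) ℝ))ᵐ⁰,
      StrictMono ψ := by
  classical
  obtain ⟨j, hj, -⟩ := hahnEmbedding_isOrderedAddMonoid (Additive Γˣ)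
  have hmono : StrictMono (AddMonoidHom.toMultiplicativeRight j.toAddMonoidHom) :=
    j.monotone'.strictMono_of_injective hj
  let e := (OrderMonoidIso.withZeroUnits (α := Γ)).symm
  exact ⟨(WithZero.map' (AddMonoidHom.toMultiplicativeRight j.toAddMonoidHom)).comp
    e.toMulEquiv.toMonoidWithZeroHom,
    (WithZero.map'_strictMono hmono).comp e.strictMono⟩

end OrderedRealSpaces

section Integrality

variable {k B : Type*} [CommRing k] [CommRing B] [Algebra k B]

/-- Integrality of `g` over the submodule `I`. This is the usual integral dependence on an ideal,
except that `I` need only be stable under the base ring, so that it also measures degree. -/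
def IsIntegralOver (I : Submodule k B) (g : B) : Prop :=
  ∃ (r : ℕ) (c : ℕ → B), (∀ i < r, c i ∈ I ^ (r - i)) ∧ g ^ r = ∑ i ∈ Finset.range r, c i * g ^ i

/-- The Rees algebra `⨁ Mʲ Tʲ ⊆ B[T]` of a submodule `M` of an algebra, over which `gT` is integral
when `g` is integral over `M`. -/
def submoduleRees (M : Submodule k B) : Subalgebra k (Polynomial B) where
  carrier := {p | ∀ j, p.coeff j ∈ M ^ j}
  mul_mem' hp hq j := by
    rw [Polynomial.coeff_mul]
    refine sum_mem fun x hx ↦ ?_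
    rw [← Finset.HasAntidiagonal.mem_antidiagonal.1 hx, pow_add]
    exact Submodule.mul_mem_mul (hp _) (hq _)
  add_mem' hp hq j := by
    rw [Polynomial.coeff_add]
    exact add_mem (hp j) (hq j)
  algebraMap_mem' c j := by
    rw [Polynomial.algebraMap_apply, Polynomial.coeff_C]
    split_ifs with hj
    · rw [hj, pow_zero, Submodule.mem_one]
      exact ⟨c, rfl⟩
    · exact zero_mem _

theorem isIntegralOver_of_isIntegral_C_mul_X (I : Submodule k B) (g : B)
    (h : IsIntegral (submoduleRees I) (Polynomial.C g * Polynomial.X)) : IsIntegralOver I g := by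
  obtain ⟨p, hp, hroot⟩ := h
  set r := p.natDegree with hr
  set c : ℕ → B := fun i ↦ (p.coeff i : Polynomial B).coeff (r - i)
  have hterm (i : ℕ) (hi : i ≤ r) : ((algebraMap (submoduleRees I) (Polynomial B) (p.coeff i) *
      (Polynomial.C g * Polynomial.X) ^ i).coeff r) = c i * g ^ i := by
    rw [mul_pow, ← Polynomial.C_pow, ← mul_assoc, Polynomial.coeff_mul_X_pow', if_pos hi,
      Polynomial.coeff_mul_C]
    rfl
  have hlead : c r = 1 := by simp [c, hr, hp.coeff_natDegree]
  have hcoeff := congrArg (Polynomial.coeff · r) hroot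
  simp only [Polynomial.eval₂_eq_sum_range, Polynomial.finsetSum_coeff, Polynomial.coeff_zero]
    at hcoeff
  rw [Finset.sum_congr rfl fun i hi ↦ hterm i (Finset.mem_range_succ_iff.1 hi),
    Finset.sum_range_succ, hlead, one_mul] at hcoeff
  refine ⟨r, fun i ↦ -c i, fun i _ ↦ neg_mem ((p.coeff i).2 _), ?_⟩
  simpa only [neg_mul, Finset.sum_neg_distrib] using eq_neg_of_add_eq_zero_right hcoeff

theorem isIntegral_of_forall_valuationSubring {R K : Type*} [CommRing R] [Field K] {ι : R →+* K}
    (hι : Function.Injective ι) (A : Subring R) (x : R)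
    (h : ∀ O : ValuationSubring K, (∀ a ∈ A, ι a ∈ O) → ι x ∈ O) : IsIntegral A x := by
  have hmem : ι x ∈ (integralClosure (Subring.closure (A.map ι : Set K)) K).toSubring := by
    rw [← iInf_valuationSubring_superset, Subring.mem_iInf]
    exact fun O ↦ h O fun a ha ↦ O.2 ⟨a, ha, rfl⟩
  rw [Subring.closure_eq] at hmem
  obtain ⟨p, hp, hroot⟩ := hmem
  let e := A.equivMapOfInjective ι hι
  refine ⟨p.map (e.symm : A.map ι →+* A), hp.map _, hι ?_⟩
  rw [map_zero, Polynomial.hom_eval₂, Polynomial.eval₂_map, ← hroot]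
  congr 1
  ext a
  exact congrArg Subtype.val (e.apply_symm_apply a)

theorem C_mul_X_mem_submoduleRees {I : Submodule k B} {b : B} (hb : b ∈ I) :
    Polynomial.C b * Polynomial.X ∈ submoduleRees I := by
  intro j
  rw [Polynomial.coeff_C_mul, Polynomial.coeff_X]
  split_ifs with hj
  · simpa [← hj] using hb
  · simp

theorem isIntegralOver_of_forall_valuation {k : Type*} {B : Type u} [CommRing k] [CommRing B]
    [IsDomain B] [Algebra k B] (I : Submodule k B) (g : B)
    (h : ∀ (H : Type u) [AddCommGroup H] [LinearOrder H] [IsOrderedAddMonoid H] [Module ℝ H]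
      [PosSMulStrictMono ℝ H] (V : Valuation B Hᵐ⁰), (∀ c, V (algebraMap k B c) ≤ 1) →
      (∀ b, b ≠ 0 → V b ≠ 0) → ∃ b ∈ I, V g ≤ V b) :
    IsIntegralOver I g := by
  refine isIntegralOver_of_isIntegral_C_mul_X I g (isIntegral_of_forall_valuationSubring
    (IsFractionRing.injective (Polynomial B) (FractionRing (Polynomial B)))
    (submoduleRees I).toSubring _ fun O hO ↦ ?_)
  let W := O.valuation.comap (algebraMap (Polynomial B) (FractionRing (Polynomial B)))
  have hW {p : Polynomial B} (hp : p ∈ submoduleRees I) : W p ≤ 1 :=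
    (O.valuation_le_one_iff _).2 (hO p hp)
  obtain ⟨ψ, hψ⟩ := exists_strictMono_withZero_realSpace O.ValueGroup
  obtain ⟨b, hb, hgb⟩ := h _ ((W.comap Polynomial.C).map ψ hψ.monotone)
    (fun c ↦ (map_one ψ).subst (hψ.monotone (hW ((submoduleRees I).algebraMap_mem c))))
    (fun b hb ↦ by simpa [W] using hb)
  refine (O.valuation_le_one_iff _).1 ?_
  calc W (Polynomial.C g * Polynomial.X) = W (Polynomial.C g) * W Polynomial.X := map_mul _ _ _
    _ ≤ W (Polynomial.C b) * W Polynomial.X := mul_le_mul_left (hψ.le_iff_le.1 hgb) _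
    _ = W (Polynomial.C b * Polynomial.X) := (map_mul _ _ _).symm
    _ ≤ 1 := hW (C_mul_X_mem_submoduleRees hb)

end Integrality

section FiniteExtensions

theorem exists_injective_linearMap_pi {S M : Type*} [CommRing S] [IsDomain S] [IsNoetherianRing S]
    [AddCommGroup M] [Module S M] [Module.Finite S M] [Module.IsTorsionFree S M] :
    ∃ (n : ℕ) (lam : M →ₗ[S] (Fin n → S)), Function.Injective lam := by
  let K := FractionRing S
  let b := Module.finBasis K (LocalizedModule (nonZeroDivisors S) M)
  let j := (b.equivFun.toLinearMap.restrictScalars S) ∘ₗ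
    LocalizedModule.mkLinearMap (nonZeroDivisors S) M
  have hj : Function.Injective j := by
    refine b.equivFun.injective.comp ((IsLocalizedModule.injective_iff_isRegular
      (nonZeroDivisors S) _).2 fun s ↦ ?_)
    exact (IsRegular.of_ne_zero (nonZeroDivisors.coe_ne_zero s)).isSMulRegular
  have := Module.finitePresentation_of_finite S M
  obtain ⟨lam, s, hlam⟩ := Module.FinitePresentation.exists_lift_of_isLocalizedModule
    (nonZeroDivisors S) (LinearMap.pi fun i ↦ Algebra.linearMap S K ∘ₗ LinearMap.proj i) j
  refine ⟨_, lam, fun x y hxy ↦ hj ?_⟩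
  have hsj : s • j x = s • j y := by
    rw [← LinearMap.smul_apply, ← LinearMap.smul_apply, ← hlam, LinearMap.comp_apply, hxy]
    rfl
  funext i
  simpa [Submonoid.smul_def, Algebra.smul_def] using congrFun hsj i

variable {τ k B : Type*} [CommRing k] [CommRing B]

section

variable [Algebra (MvPolynomial τ k) B]

theorem exists_totalDegree_pow_le (lam : B →ₗ[MvPolynomial τ k] MvPolynomial τ k) {g : B}
    {a r : ℕ} {c : ℕ → MvPolynomial τ k} (hc : ∀ i < r, (c i).totalDegree ≤ a * (r - i))
    (hg : g ^ r = ∑ i ∈ Finset.range r, c i • g ^ i) :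
    ∃ D, ∀ m, (lam (g ^ m)).totalDegree ≤ a * m + D := by
  refine ⟨∑ i ∈ Finset.range r, (lam (g ^ i)).totalDegree, fun m ↦ ?_⟩
  induction m using Nat.strong_induction_on with
  | _ m ih =>
    obtain hm | hm := lt_or_ge m r
    · exact (Finset.single_le_sum (f := fun i ↦ (lam (g ^ i)).totalDegree)
        (fun _ _ ↦ Nat.zero_le _) (Finset.mem_range.2 hm)).trans (Nat.le_add_left _ _)
    obtain ⟨m, rfl⟩ := Nat.exists_eq_add_of_le hm
    have hpow : lam (g ^ (r + m)) = ∑ i ∈ Finset.range r, c i * lam (g ^ (i + m)) := by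
      simp only [pow_add, hg, Finset.sum_mul, map_sum, smul_mul_assoc, map_smul, smul_eq_mul]
    rw [hpow]
    refine totalDegree_finsetSum_le fun i hi ↦ ?_
    have hi := Finset.mem_range.1 hi
    calc (c i * lam (g ^ (i + m))).totalDegree
        ≤ (c i).totalDegree + (lam (g ^ (i + m))).totalDegree := totalDegree_mul _ _
      _ ≤ a * (r - i) + (a * (i + m) + _) := add_le_add (hc i hi) (ih (i + m) (by lia))
      _ = a * (r + m) + _ := by rw [← add_assoc, ← mul_add]; congr 2; lia

theorem linearMap_mem_of_mem_map {S B : Type*} [CommRing S] [CommRing B] [Algebra S B]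
    (lam : B →ₗ[S] S) {I : Ideal S} {x : B} (hx : x ∈ I.map (algebraMap S B)) : lam x ∈ I := by
  have hle : I • (⊤ : Submodule S B) ≤ Submodule.comap lam I :=
    Submodule.smul_le.2 fun s hs y _ ↦ by
      simpa only [Submodule.mem_comap, map_smul, smul_eq_mul] using I.mul_mem_right _ hs
  rw [Ideal.smul_top_eq_map] at hle
  exact hle hx

theorem le_totalDegree_of_mem_pow_idealOfVars {p : MvPolynomial τ k} {n : ℕ}
    (hp : p ∈ idealOfVars τ k ^ n) (hp0 : p ≠ 0) : n ≤ p.totalDegree := by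
  obtain ⟨m, hm⟩ := support_nonempty.2 hp0
  exact ((mem_pow_idealOfVars_iff n p).1 hp m hm).trans (le_totalDegree hm)

-- In a free module containing `B`, the coordinates of `gᵐ` have order at least `dm` and degree at
-- most `am + D`, which is absurd for `m > D` unless they vanish.
theorem eq_zero_of_pow_eq_of_mem_pow [IsDomain k] [IsNoetherianRing k] [Finite τ] [IsReduced B]
    [Module.Finite (MvPolynomial τ k) B] [Module.IsTorsionFree (MvPolynomial τ k) B]
    {g : B} {a d r : ℕ} {c : ℕ → MvPolynomial τ k}
    (had : a < d) (hc : ∀ i < r, (c i).totalDegree ≤ a * (r - i))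
    (hg : g ^ r = ∑ i ∈ Finset.range r, c i • g ^ i)
    (hgd : g ∈ (idealOfVars τ k).map (algebraMap (MvPolynomial τ k) B) ^ d) : g = 0 := by
  obtain ⟨n, lam, hlam⟩ := exists_injective_linearMap_pi (S := MvPolynomial τ k) (M := B)
  choose D hD using fun j ↦ exists_totalDegree_pow_le (LinearMap.proj j ∘ₗ lam) hc hg
  set m := ∑ j, D j + 1
  have hzero : lam (g ^ m) = 0 := by
    funext j
    by_contra hne
    have hord : lam (g ^ m) j ∈ idealOfVars τ k ^ (d * m) :=
      linearMap_mem_of_mem_map (LinearMap.proj j ∘ₗ lam)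
        (by rw [Ideal.map_pow, pow_mul]; exact Ideal.pow_mem_pow hgd m)
    have hdeg : d * m ≤ a * m + D j :=
      (le_totalDegree_of_mem_pow_idealOfVars hord hne).trans (hD j m)
    have hDm : D j < m :=
      Nat.lt_succ_of_le (Finset.single_le_sum (fun _ _ ↦ Nat.zero_le _) (Finset.mem_univ j))
    have hadm : (a + 1) * m ≤ d * m := Nat.mul_le_mul_right m had
    rw [add_mul, one_mul] at hadm
    lia
  exact eq_zero_of_pow_eq_zero (hlam (hzero.trans (map_zero lam).symm))

end

variable [Algebra k B]

theorem map_restrictTotalDegree_pow_le (φ : MvPolynomial τ k →ₐ[k] B) (a : ℕ) :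
    (restrictTotalDegree τ k 1).map φ.toLinearMap ^ a ≤
      (restrictTotalDegree τ k a).map φ.toLinearMap := by
  rw [← Submodule.map_pow]
  refine Submodule.map_mono ?_
  induction a with
  | zero =>
    rw [pow_zero, Submodule.one_le]
    simp [mem_restrictTotalDegree]
  | succ a ih =>
    rw [pow_succ, Submodule.mul_le]
    intro p hp q hq
    have hp := (mem_restrictTotalDegree _ _ _).1 (ih hp)
    have hq := (mem_restrictTotalDegree _ _ _).1 hq
    exact (mem_restrictTotalDegree _ _ _).2 ((totalDegree_mul p q).trans (add_le_add hp hq))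

theorem IsIntegralOver.exists_totalDegree_le {φ : MvPolynomial τ k →ₐ[k] B} {a : ℕ} {g : B}
    (h : IsIntegralOver ((restrictTotalDegree τ k 1).map φ.toLinearMap ^ a) g) :
    ∃ (r : ℕ) (c : ℕ → MvPolynomial τ k), (∀ i < r, (c i).totalDegree ≤ a * (r - i)) ∧
      g ^ r = ∑ i ∈ Finset.range r, φ (c i) * g ^ i := by
  obtain ⟨r, b, hb, hg⟩ := h
  have hlift : ∀ i < r, ∃ c : MvPolynomial τ k, c.totalDegree ≤ a * (r - i) ∧ φ c = b i := by
    intro i hi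
    have hbi := hb i hi
    rw [← pow_mul] at hbi
    obtain ⟨c, hc, hcb⟩ := map_restrictTotalDegree_pow_le _ _ hbi
    exact ⟨c, (mem_restrictTotalDegree _ _ _).1 hc, hcb⟩
  choose! c hdeg hcb using hlift
  refine ⟨r, c, hdeg, hg.trans (Finset.sum_congr rfl fun i hi ↦ ?_)⟩
  rw [hcb i (Finset.mem_range.1 hi)]

theorem IsIntegralOver.isIntegralElem {φ : MvPolynomial τ k →ₐ[k] B} {a : ℕ} {g : B}
    (h : IsIntegralOver ((restrictTotalDegree τ k 1).map φ.toLinearMap ^ a) g) :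
    φ.toRingHom.IsIntegralElem g := by
  obtain ⟨r, c, -, hg⟩ := h.exists_totalDegree_le
  have hdeg : (∑ i ∈ Finset.range r, Polynomial.C (c i) * Polynomial.X ^ i).degree <
      (r : WithBot ℕ) := by
    refine Polynomial.mem_degreeLT.1 (sum_mem fun i hi ↦ Polynomial.mem_degreeLT.2 ?_)
    exact (Polynomial.degree_C_mul_X_pow_le _ _).trans_lt
      (Nat.cast_lt.2 (Finset.mem_range.1 hi))
  refine ⟨_, Polynomial.monic_X_pow_sub hdeg, ?_⟩
  simp [Polynomial.eval₂_finsetSum, Polynomial.eval₂_sub, hg]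

theorem eq_zero_of_isIntegralOver_of_mem_span_pow [IsDomain k] [IsNoetherianRing k] [Finite τ]
    [IsDomain B] {F : τ → B} (hind : AlgebraicIndependent k F)
    (hfin : (aeval F : MvPolynomial τ k →ₐ[k] B).Finite) {g : B} {a d : ℕ} (had : a < d)
    (hint : IsIntegralOver ((restrictTotalDegree τ k 1).map (aeval F).toLinearMap ^ a) g)
    (hgd : g ∈ Ideal.span (Set.range F) ^ d) : g = 0 := by
  obtain ⟨r, c, hc, hg⟩ := hint.exists_totalDegree_le
  algebraize [(aeval F : MvPolynomial τ k →ₐ[k] B).toRingHom]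
  have : Module.Finite (MvPolynomial τ k) B := hfin
  have : Module.IsTorsionFree (MvPolynomial τ k) B :=
    Module.isTorsionFree_iff_algebraMap_injective.2 hind
  have hspan : (idealOfVars τ k).map (algebraMap (MvPolynomial τ k) B) =
      Ideal.span (Set.range F) := by
    rw [idealOfVars, Ideal.map_span, ← Set.range_comp]
    congr 2
    exact funext fun i ↦ aeval_X F i
  exact eq_zero_of_pow_eq_of_mem_pow had hc
    (by simp only [Algebra.smul_def]; exact hg) (by rwa [hspan])

theorem finite_aeval_of_forall_X_isIntegralElem [Finite τ] {F : τ → MvPolynomial τ k}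
    (hF : ∀ i, (aeval F : MvPolynomial τ k →ₐ[k] MvPolynomial τ k).toRingHom.IsIntegralElem (X i)) :
    (aeval F : MvPolynomial τ k →ₐ[k] MvPolynomial τ k).Finite := by
  set φ := (aeval F : MvPolynomial τ k →ₐ[k] MvPolynomial τ k)
  have hint : φ.toRingHom.IsIntegral := fun p ↦ by
    induction p using MvPolynomial.induction_on with
    | C c => simpa [φ] using φ.toRingHom.isIntegralElem_map (x := C c)
    | add p q hp hq => exact hp.add _ hq
    | mul_X p i hp => exact hp.mul _ (hF i)
  refine RingHom.Finite.of_isIntegral_of_finiteType hint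
    (AlgHom.FiniteType.of_comp_finiteType (f := Algebra.ofId k (MvPolynomial τ k)) ?_)
  rw [Subsingleton.elim (φ.comp _) (Algebra.ofId k _)]
  exact RingHom.finiteType_algebraMap.2 inferInstance

theorem algebraicIndependent_of_finite [IsDomain k] [Finite τ] {F : τ → MvPolynomial τ k}
    (hF : (aeval F : MvPolynomial τ k →ₐ[k] MvPolynomial τ k).Finite) :
    AlgebraicIndependent k F := by
  set φ := (aeval F : MvPolynomial τ k →ₐ[k] MvPolynomial τ k)
  have hint : Algebra.IsIntegral φ.range (MvPolynomial τ k) :=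
    ⟨RingHom.IsIntegral.tower_top φ.rangeRestrict.toRingHom φ.range.val.toRingHom
      (RingHom.Finite.to_isIntegral hF)⟩
  rw [← Algebra.adjoin_range_eq_range_aeval] at hint
  exact (Algebra.IsAlgebraic.isTranscendenceBasis_of_lift_le_trdeg_of_finite k F
    (by rw [trdeg_of_isDomain, Cardinal.lift_lift, Cardinal.lift_umax])).1

end FiniteExtensions

section MonomialValuations

open WithZero (exp log exp_add exp_nsmul exp_log exp_pos exp_ne_zero)

variable {σ k H : Type*} [CommRing k] [AddCommGroup H] [LinearOrder H] [IsOrderedAddMonoid H]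

theorem valuation_monomial (V : Valuation (MvPolynomial σ k) Hᵐ⁰) (hX : ∀ i, V (X i) ≠ 0)
    (m : σ →₀ ℕ) :
    V (monomial m 1) = exp (Finsupp.weight (fun i ↦ log (V (X i))) m) := by
  induction m using Finsupp.induction_linear with
  | zero => simp
  | add m m' hm hm' => rw [← one_mul (1 : k), ← monomial_mul, map_mul, hm, hm', map_add, exp_add]
  | single i r => rw [← X_pow_eq_monomial, map_pow, Finsupp.weight_single, exp_nsmul,
      exp_log (hX i)]

variable {V : Valuation (MvPolynomial σ k) Hᵐ⁰}

theorem valuation_monomial_le (hC : ∀ c, V (C c) ≤ 1) (m : σ →₀ ℕ) (c : k) :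
    V (monomial m c) ≤ V (monomial m 1) := by
  rw [← mul_one c, ← C_mul_monomial, map_mul]
  exact mul_le_of_le_one_left' (hC c)

theorem valuation_le_of_forall_mem_support (hC : ∀ c, V (C c) ≤ 1) {p : MvPolynomial σ k}
    {γ : Hᵐ⁰} (h : ∀ m ∈ p.support, V (monomial m 1) ≤ γ) : V p ≤ γ := by
  rw [p.as_sum]
  exact V.map_sum_le fun m hm ↦ (valuation_monomial_le hC m _).trans (h m hm)

theorem valuation_lt_of_forall_mem_support (hC : ∀ c, V (C c) ≤ 1) {p : MvPolynomial σ k}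
    {γ : Hᵐ⁰} (hγ : γ ≠ 0) (h : ∀ m ∈ p.support, V (monomial m 1) < γ) : V p < γ := by
  rw [p.as_sum]
  exact V.map_sum_lt hγ fun m hm ↦ (valuation_monomial_le hC m _).trans_lt (h m hm)

theorem exists_isWeightedHomogeneous_sum_mul {M ι : Type*} [AddCommGroup M] [Fintype ι]
    {w : σ → M} {n d : M} {G : ι → MvPolynomial σ k} {p : MvPolynomial σ k}
    (hG : ∀ i, IsWeightedHomogeneous w (G i) d) (hp : IsWeightedHomogeneous w p (n + d))
    (h : p ∈ Ideal.span (Set.range G)) :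
    ∃ b : ι → MvPolynomial σ k, (∀ i, IsWeightedHomogeneous w (b i) n) ∧ ∑ i, b i * G i = p := by
  classical
  obtain ⟨b, rfl⟩ := Ideal.mem_span_range_iff_exists_fun.1 h
  refine ⟨fun i ↦ weightedHomogeneousComponent w n (b i),
    fun i ↦ weightedHomogeneousComponent_isWeightedHomogeneous n (b i), ?_⟩
  let _ := weightedGradedAlgebra k w
  rw [← hp.weightedHomogeneousComponent_same, map_sum]
  refine Finset.sum_congr rfl fun i _ ↦ ?_
  simp only [← weightedDecomposition.decompose'_apply]
  exact (DirectSum.coe_decompose_mul_add_of_right_mem (weightedHomogeneousSubmodule k w)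
    (hG i)).symm

theorem valuation_lt_of_mem_span {ι : Type*} [Finite ι] (hC : ∀ c, V (C c) ≤ 1)
    (hX : ∀ i, V (X i) ≠ 0) {n d : H} {G : ι → MvPolynomial σ k} {p : MvPolynomial σ k}
    (hG : ∀ i, IsWeightedHomogeneous (fun i ↦ log (V (X i))) (G i) d)
    (hVG : ∀ i, V (G i) < exp d)
    (hp : IsWeightedHomogeneous (fun i ↦ log (V (X i))) p (n + d))
    (h : p ∈ Ideal.span (Set.range G)) : V p < exp (n + d) := by
  have := Fintype.ofFinite ι
  obtain ⟨b, hb, rfl⟩ := exists_isWeightedHomogeneous_sum_mul hG hp h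
  refine V.map_sum_lt exp_ne_zero fun i _ ↦ ?_
  have hVb : V (b i) ≤ exp n := valuation_le_of_forall_mem_support hC fun m hm ↦ by
    rw [valuation_monomial V hX, hb i (mem_support_iff.1 hm)]
  rw [map_mul, exp_add]
  exact (mul_le_mul_left hVb _).trans_lt (mul_lt_mul_of_pos_left (hVG i) exp_pos)

theorem exists_monomial_mem_span {K ι : Type*} [Field K] [IsAlgClosed K] [Finite σ]
    {G : ι → MvPolynomial σ K} (h : ¬∃ x : σ → K, (∀ i, x i ≠ 0) ∧ ∀ i, eval x (G i) = 0) :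
    ∃ m, monomial m 1 ∈ Ideal.span (Set.range G) := by
  have := Fintype.ofFinite σ
  have hrad : ∏ i, X i ∈ (Ideal.span (Set.range G)).radical := by
    rw [← vanishingIdeal_zeroLocus_eq_radical (K := K), zeroLocus_span]
    intro x hx
    by_contra hprod
    refine h ⟨x, fun i hi ↦ hprod ?_, fun i ↦ ?_⟩
    · rw [map_prod, Finset.prod_eq_zero (Finset.mem_univ i) (by rwa [aeval_X])]
    · simpa [coe_aeval_eq_eval] using hx (G i) ⟨i, rfl⟩
  obtain ⟨N, hN⟩ := hrad
  refine ⟨N • ∑ i, Finsupp.single i 1, ?_⟩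
  rwa [← one_pow (M := K) N, ← monomial_pow, monomial_sum_one]

theorem exists_torus_zero_of_valuation_lt {K ι : Type*} [Field K] [IsAlgClosed K] [Finite σ]
    [Finite ι] {V : Valuation (MvPolynomial σ K) Hᵐ⁰} (hC : ∀ c, V (C c) ≤ 1)
    (hX : ∀ i, V (X i) ≠ 0) {d : H} {G : ι → MvPolynomial σ K}
    (hG : ∀ i, IsWeightedHomogeneous (fun i ↦ log (V (X i))) (G i) d)
    (hVG : ∀ i, V (G i) < exp d) :
    ∃ x : σ → K, (∀ i, x i ≠ 0) ∧ ∀ i, eval x (G i) = 0 := by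
  by_contra h
  obtain ⟨m, hm⟩ := exists_monomial_mem_span h
  refine (valuation_lt_of_mem_span hC hX (n := Finsupp.weight _ m - d) hG hVG
    (isWeightedHomogeneous_monomial _ _ _ (sub_add_cancel _ _).symm) hm).ne ?_
  rw [sub_add_cancel, valuation_monomial V hX]

end MonomialValuations

open ToricNewton

section NewtonPolytopes

open scoped Pointwise

variable {σ : Type*}

theorem toR_mem_newtonPolytope {f : MvPolynomial σ ℂ} {e : σ →₀ ℕ} (he : e ∈ f.support) :
    toR e ∈ newtonPolytope f :=
  subset_convexHull ℝ _ (Or.inr ⟨e, he, rfl⟩)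

theorem zero_mem_newtonPolytope (f : MvPolynomial σ ℂ) : 0 ∈ newtonPolytope f :=
  subset_convexHull ℝ _ (Or.inl rfl)

theorem linearMap_le_of_mem_newtonPolytope {H : Type*} [AddCommGroup H] [LinearOrder H]
    [IsOrderedAddMonoid H] [Module ℝ H] [PosSMulStrictMono ℝ H] {f : MvPolynomial σ ℂ}
    (φ : (σ → ℝ) →ₗ[ℝ] H) {c : H} (hc : 0 ≤ c) (hφ : ∀ e ∈ f.support, φ (toR e) ≤ c)
    {x : σ → ℝ} (hx : x ∈ newtonPolytope f) : φ x ≤ c := by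
  refine convexHull_min (t := φ ⁻¹' Set.Iic c) ?_ ((convex_Iic c).linear_preimage φ) hx
  rintro _ (rfl | ⟨e, he, rfl⟩)
  · simpa using hc
  · exact hφ e he

theorem exists_nbFace_of_linearMap [Finite σ] {H : Type*} [AddCommGroup H] [LinearOrder H]
    [IsOrderedAddMonoid H] [Module ℝ H] [PosSMulStrictMono ℝ H] {f : MvPolynomial σ ℂ}
    (φ : (σ → ℝ) →ₗ[ℝ] H) {e₀ : σ →₀ ℕ} (he₀ : e₀ ∈ f.support)
    (hmax : ∀ e ∈ f.support, φ (toR e) ≤ φ (toR e₀)) (hpos : 0 < φ (toR e₀)) :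
    ∃ Δ, NBFace f Δ ∧ ∀ e ∈ f.support, toR e ∈ Δ ↔ φ (toR e) = φ (toR e₀) := by
  have := Fintype.ofFinite σ
  obtain ⟨l, hl0, hlneg⟩ := exists_linearForm_neg_of_neg φ
    (s := insert (-toR e₀) ((fun e ↦ toR e - toR e₀) '' f.support))
    ((f.support.finite_toSet.image _).insert _)
  have hlpos : 0 < l (toR e₀) := by
    simpa using hlneg _ (Set.mem_insert _ _) (by simpa using hpos)
  have hlt : ∀ e ∈ f.support, φ (toR e) < φ (toR e₀) → l (toR e) < l (toR e₀) := fun e he h ↦ by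
    simpa using hlneg _ (Or.inr ⟨e, he, rfl⟩) (by simpa using h)
  have heq : ∀ e, φ (toR e) = φ (toR e₀) → l (toR e) = l (toR e₀) := fun e h ↦ by
    simpa [sub_eq_zero, h] using hl0 (toR e - toR e₀)
  have hle : ∀ x ∈ newtonPolytope f, l x ≤ l (toR e₀) := fun x hx ↦
    linearMap_le_of_mem_newtonPolytope l hlpos.le
      (fun e he ↦ (hmax e he).lt_or_eq.elim (fun h ↦ (hlt e he h).le) fun h ↦ (heq e h).le) hx
  refine ⟨{x ∈ newtonPolytope f | l x = l (toR e₀)},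
    ⟨⟨⟨toR e₀, toR_mem_newtonPolytope he₀, rfl⟩, l, _, hle, rfl⟩, fun h ↦ ?_⟩, fun e he ↦ ?_⟩
  · exact hlpos.ne ((map_zero l).symm.trans h.2)
  · exact ⟨fun h ↦ (hmax e he).antisymm (not_lt.1 fun hφ ↦ (hlt e he hφ).ne h.2),
      fun h ↦ ⟨toR_mem_newtonPolytope he, heq e h⟩⟩

theorem linearCombination_toR [Fintype σ] {H : Type*} [AddCommGroup H] [Module ℝ H] (w : σ → H)
    (m : σ →₀ ℕ) : Fintype.linearCombination ℝ w (toR m) = Finsupp.weight w m := by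
  rw [Finsupp.weight_apply, Finsupp.sum_fintype _ _ (by simp), Fintype.linearCombination_apply]
  simp only [toR, Nat.cast_smul_eq_nsmul]

theorem coeff_faceRestrict (Δ : Set (σ → ℝ)) [DecidablePred fun m : σ →₀ ℕ ↦ toR m ∈ Δ]
    (g : MvPolynomial σ ℂ) (m : σ →₀ ℕ) :
    (faceRestrict Δ g).coeff m = if toR m ∈ Δ then g.coeff m else 0 := by
  classical
  simp only [faceRestrict, coeff_sum, apply_ite (coeff m), coeff_monomial, coeff_zero]
  split_ifs with hm
  · rw [Finset.sum_eq_single m (fun m' _ hne ↦ by simp [hne])]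
    all_goals simp +contextual [hm]
  · exact Finset.sum_eq_zero fun m' _ ↦ by grind

/-- The logarithmic partial derivatives `uᵢ ∂f/∂uᵢ`, the generators of `ℒ`. -/
noncomputable abbrev logPDeriv (f : MvPolynomial σ ℂ) (i : σ) : MvPolynomial σ ℂ :=
  X i * pderiv i f

theorem support_logPDeriv_subset (f : MvPolynomial σ ℂ) (i : σ) :
    (logPDeriv f i).support ⊆ f.support := by
  classical
  intro m hm
  rw [mem_support_iff, coeff_X_mul', ite_ne_right_iff] at hm
  have hle : Finsupp.single i 1 ≤ m :=
    Finsupp.single_le_iff.2 (Nat.one_le_iff_ne_zero.2 (Finsupp.mem_support_iff.1 hm.1))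
  rw [coeff_pderiv, tsub_add_cancel_of_le hle] at hm
  exact mem_support_iff.2 (left_ne_zero_of_mul hm.2)

theorem exists_add_mem_smul_of_convex {E : Type*} [AddCommGroup E] [Module ℝ E] {P : Set E}
    (hP : Convex ℝ P) {x y : E} (hx : ∃ r : ℝ, 0 < r ∧ x ∈ r • P)
    (hy : ∃ r : ℝ, 0 < r ∧ y ∈ r • P) : ∃ r : ℝ, 0 < r ∧ x + y ∈ r • P := by
  obtain ⟨r, hr, hxr⟩ := hx
  obtain ⟨t, ht, hyt⟩ := hy
  exact ⟨r + t, add_pos hr ht, (hP.add_smul hr.le ht.le).symm ▸ Set.add_mem_add hxr hyt⟩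

theorem exists_mem_smul_newtonPolytope [Finite σ] {f : MvPolynomial σ ℂ}
    (hconv : Convenient f) {x : σ → ℝ} (hx : 0 ≤ x) :
    ∃ r : ℝ, 0 < r ∧ x ∈ r • newtonPolytope f := by
  classical
  have := Fintype.ofFinite σ
  have hzero : ∃ r : ℝ, 0 < r ∧ 0 ∈ r • newtonPolytope f :=
    ⟨1, one_pos, 0, zero_mem_newtonPolytope f, smul_zero 1⟩
  rw [← Finset.univ_sum_single x]
  refine Finset.sum_induction _ (fun y ↦ ∃ r : ℝ, 0 < r ∧ y ∈ r • newtonPolytope f)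
    (fun _ _ ↦ exists_add_mem_smul_of_convex (convex_convexHull ℝ _)) hzero fun i _ ↦ ?_
  obtain hxi | hxi := (hx i).eq_or_lt
  · rwa [← hxi, Pi.zero_apply, Pi.single_zero]
  · obtain ⟨k, hk, hfk⟩ := hconv i
    have hk : 0 < (k : ℝ) := Nat.cast_pos.2 hk
    refine ⟨x i / k, div_pos hxi hk, toR (Finsupp.single i k),
      toR_mem_newtonPolytope (mem_support_iff.2 hfk), funext fun j ↦ ?_⟩
    obtain rfl | hij := eq_or_ne j i
    · simp [toR, div_mul_cancel₀ _ hk.ne']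
    · simp [toR, hij]

theorem linearMap_le_of_nu_lt [Finite σ] {H : Type*} [AddCommGroup H] [LinearOrder H]
    [IsOrderedAddMonoid H] [Module ℝ H] [PosSMulStrictMono ℝ H] {f : MvPolynomial σ ℂ}
    (hconv : Convenient f) (φ : (σ → ℝ) →ₗ[ℝ] H) {c : H} (hc : 0 ≤ c)
    (hφ : ∀ e ∈ f.support, φ (toR e) ≤ c) {x : σ → ℝ} (hx : 0 ≤ x) {t : ℝ} (hxt : nu f x < t) :
    φ x ≤ t • c := by
  obtain ⟨r, ⟨hr, hxr⟩, hrt⟩ := exists_lt_of_csInf_lt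
    (exists_mem_smul_newtonPolytope hconv hx) hxt
  obtain ⟨y, hy, rfl⟩ := hxr
  calc φ (r • y) = r • φ y := map_smul φ r y
    _ ≤ r • c := smul_le_smul_of_nonneg_left (linearMap_le_of_mem_newtonPolytope φ hc hφ hy) hr.le
    _ ≤ t • c := smul_le_smul_of_nonneg_right hrt.le hc

end NewtonPolytopes

section NondegenerateValuations

open WithZero (exp log exp_ne_zero exp_log log_exp exp_inj exp_le_exp exp_lt_exp)

variable {σ H : Type*} [AddCommGroup H] [LinearOrder H] [IsOrderedAddMonoid H]
  {V : Valuation (MvPolynomial σ ℂ) Hᵐ⁰} {f : MvPolynomial σ ℂ}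

theorem valuation_faceRestrict_lt (hC : ∀ c, V (C c) ≤ 1) {Δ : Set (σ → ℝ)} {μ : Hᵐ⁰} (hμ : μ ≠ 0)
    {g : MvPolynomial σ ℂ} (hg : V g < μ)
    (hΔ : ∀ m ∈ g.support, toR m ∉ Δ → V (monomial m 1) < μ) : V (faceRestrict Δ g) < μ := by
  classical
  rw [← sub_sub_cancel g (faceRestrict Δ g)]
  refine V.map_sub_lt hg (valuation_lt_of_forall_mem_support hC hμ fun m hm ↦ ?_)
  rw [mem_support_iff, coeff_sub, coeff_faceRestrict] at hm
  split_ifs at hm with hmΔ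
  · exact absurd (sub_self _) hm
  · exact hΔ m (mem_support_iff.2 (by rwa [sub_zero] at hm)) hmΔ

variable [Finite σ] [Module ℝ H] [PosSMulStrictMono ℝ H]

theorem valuation_monomial_le_of_logPDeriv_le (hC : ∀ c, V (C c) ≤ 1)
    (hX : ∀ i, V (X i) ≠ 0) (hnd : Nondegenerate f) {γ : Hᵐ⁰} (hγ : 1 ≤ γ)
    (hF : ∀ i, V (logPDeriv f i) ≤ γ) {e : σ →₀ ℕ} (he : e ∈ f.support) :
    V (monomial e 1) ≤ γ := by
  classical
  have := Fintype.ofFinite σ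
  set w : σ → H := fun i ↦ log (V (X i))
  obtain ⟨e₀, he₀, hmax⟩ := f.support.exists_max_image (fun e ↦ V (monomial e 1)) ⟨e, he⟩
  refine (hmax e he).trans (not_lt.1 fun hlt ↦ ?_)
  set d := Finsupp.weight w e₀
  rw [valuation_monomial V hX e₀] at hlt
  simp only [valuation_monomial V hX, exp_le_exp] at hmax
  obtain ⟨Δ, hΔ, hΔmem⟩ := exists_nbFace_of_linearMap (Fintype.linearCombination ℝ w) he₀
    (fun e he ↦ by rw [linearCombination_toR, linearCombination_toR]; exact hmax e he)
    (by rw [linearCombination_toR]; exact exp_lt_exp.1 (hγ.trans_lt hlt))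
  replace hΔmem (m : σ →₀ ℕ) (hm : m ∈ f.support) : toR m ∈ Δ ↔ Finsupp.weight w m = d := by
    rw [hΔmem m hm, linearCombination_toR, linearCombination_toR]
  refine hnd Δ hΔ (exists_torus_zero_of_valuation_lt hC hX (d := d) (fun i m hm ↦ ?_) fun i ↦ ?_)
  · rw [coeff_faceRestrict, ite_ne_right_iff, ← mem_support_iff] at hm
    exact (hΔmem m (support_logPDeriv_subset f i hm.2)).1 hm.1
  · refine valuation_faceRestrict_lt hC exp_ne_zero ((hF i).trans_lt hlt) fun m hm hmΔ ↦ ?_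
    have hmf := support_logPDeriv_subset f i hm
    rw [hΔmem m hmf] at hmΔ
    rw [valuation_monomial V hX]
    exact exp_lt_exp.2 ((hmax m hmf).lt_of_ne hmΔ)

theorem valuation_le_exp_smul (hC : ∀ c, V (C c) ≤ 1) (hX : ∀ i, V (X i) ≠ 0)
    (hconv : Convenient f) (hnd : Nondegenerate f) {c : H} (hc : 0 ≤ c)
    (hF : ∀ i, V (logPDeriv f i) ≤ exp c) {t : ℝ} {g : MvPolynomial σ ℂ}
    (hg : ∀ m ∈ g.support, nu f (toR m) < t) : V g ≤ exp (t • c) := by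
  have := Fintype.ofFinite σ
  set φ := Fintype.linearCombination ℝ fun i ↦ log (V (X i))
  have hV (m : σ →₀ ℕ) : V (monomial m 1) = exp (φ (toR m)) := by
    rw [valuation_monomial V hX, linearCombination_toR]
  refine valuation_le_of_forall_mem_support hC fun m hm ↦ ?_
  rw [hV, exp_le_exp]
  refine linearMap_le_of_nu_lt hconv φ hc (fun e he ↦ ?_) (fun i ↦ (m i).cast_nonneg) (hg m hm)
  rw [← exp_le_exp, ← hV]
  exact valuation_monomial_le_of_logPDeriv_le hC hX hnd (exp_le_exp.2 hc) hF he

end NondegenerateValuations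

section BelowOne

open WithZero (exp log exp_le_exp)

theorem exists_forall_valuation_le {k B τ Γ : Type*} [CommRing k] [CommRing B] [Algebra k B]
    [LinearOrderedCommGroupWithZero Γ] [Finite τ] (V : Valuation B Γ) (F : τ → B) :
    ∃ b ∈ (restrictTotalDegree τ k 1).map (aeval F).toLinearMap, 1 ≤ V b ∧
      ∀ i, V (F i) ≤ V b := by
  obtain ⟨o, ho⟩ := Finite.exists_max fun o : Option τ ↦ V (o.elim 1 F)
  refine ⟨o.elim 1 F, ?_, by simpa using ho none, fun i ↦ ho (some i)⟩
  cases o with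
  | none => exact ⟨1, by simp [mem_restrictTotalDegree], by simp⟩
  | some i =>
    have hdeg : (X i : MvPolynomial τ k).totalDegree ≤ 1 :=
      (totalDegree_monomial_le _ _).trans (Finsupp.sum_single_index rfl).le
    exact ⟨X i, (mem_restrictTotalDegree _ _ _).2 hdeg, by simp⟩

variable {σ : Type u} [Finite σ] {f : MvPolynomial σ ℂ}

theorem isIntegralOver_of_nu_lt (hconv : Convenient f) (hnd : Nondegenerate f) {a d : ℕ}
    (hd : d ≠ 0) {g : MvPolynomial σ ℂ} (hg : ∀ m ∈ g.support, nu f (toR m) < a / d) :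
    IsIntegralOver ((restrictTotalDegree σ ℂ 1).map (aeval (logPDeriv f)).toLinearMap ^ a)
      (g ^ d) := by
  refine isIntegralOver_of_forall_valuation _ _ fun H _ _ _ _ _ V hC hV ↦ ?_
  obtain ⟨b, hb, hb1, hbF⟩ := exists_forall_valuation_le (k := ℂ) V (logPDeriv f)
  refine ⟨b ^ a, Submodule.pow_mem_pow _ hb a, ?_⟩
  have hexp : exp (log (V b)) = V b := WithZero.exp_log (zero_lt_one.trans_le hb1).ne'
  have hVg : V g ≤ exp ((a / d : ℝ) • log (V b)) :=
    valuation_le_exp_smul hC (fun i ↦ hV _ (X_ne_zero i)) hconv hnd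
      (exp_le_exp.1 (hexp.symm ▸ hb1)) (hexp.symm ▸ hbF) hg
  calc V (g ^ d) = V g ^ d := map_pow V g d
    _ ≤ exp ((a / d : ℝ) • log (V b)) ^ d := pow_le_pow_left' hVg d
    _ = exp (a • log (V b)) := by
      rw [← WithZero.exp_nsmul, ← Nat.cast_smul_eq_nsmul ℝ, ← Nat.cast_smul_eq_nsmul ℝ, smul_smul,
        mul_div_cancel₀ _ (Nat.cast_ne_zero.2 hd)]
    _ = V (b ^ a) := by rw [WithZero.exp_nsmul, hexp, map_pow]

theorem finite_aeval_logPDeriv (hconv : Convenient f) (hnd : Nondegenerate f) :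
    (aeval (logPDeriv f) : MvPolynomial σ ℂ →ₐ[ℂ] MvPolynomial σ ℂ).Finite := by
  refine finite_aeval_of_forall_X_isIntegralElem fun i ↦ ?_
  obtain ⟨a, ha⟩ := exists_nat_gt (nu f (toR (Finsupp.single i 1)))
  have hint := isIntegralOver_of_nu_lt hconv hnd (a := a) (g := X i) one_ne_zero
    (fun m hm ↦ by rwa [Finset.mem_singleton.1 (support_monomial_subset hm), Nat.cast_one, div_one])
  exact (pow_one (X i : MvPolynomial σ ℂ) ▸ hint).isIntegralElem

theorem disjoint_Nle_LIdeal [DecidableEq σ] (hconv : Convenient f) (hnd : Nondegenerate f) {α : ℝ}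
    (hα : α < 1) :
    Disjoint (Nle f α) ((LIdeal f).restrictScalars ℂ) := by
  refine Submodule.disjoint_def.2 fun g hg hgL ↦ ?_
  obtain ⟨n, hn⟩ := exists_nat_one_div_lt (sub_pos.2 hα)
  have hfin := finite_aeval_logPDeriv hconv hnd
  have hαn : α < (n : ℕ) / (n + 1 : ℕ) := by
    have hsub : (n : ℝ) / (n + 1) = 1 - 1 / (n + 1) := by field_simp; ring
    push_cast
    linarith
  exact eq_zero_of_pow_eq_zero (eq_zero_of_isIntegralOver_of_mem_span_pow
    (algebraicIndependent_of_finite hfin) hfin n.lt_succ_self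
    (isIntegralOver_of_nu_lt hconv hnd n.succ_ne_zero fun m hm ↦ (hg m hm).trans_lt hαn)
    (Ideal.pow_mem_pow hgL _))

end BelowOne

section GradedDimension

variable {σ : Type*}

theorem restrictSupport_union {k : Type*} [CommSemiring k] (s t : Set (σ →₀ ℕ)) :
    restrictSupport k (s ∪ t) = restrictSupport k s ⊔ restrictSupport k t := by
  simp only [restrictSupport_eq_span, Set.image_union, Submodule.span_union]

theorem disjoint_restrictSupport {k : Type*} [CommSemiring k] {s t : Set (σ →₀ ℕ)}
    (h : Disjoint s t) : Disjoint (restrictSupport k s) (restrictSupport k t) := by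
  refine Submodule.disjoint_def.2 fun p hs ht ↦ support_eq_empty.1 ?_
  exact Finset.coe_eq_empty.1 (Set.subset_eq_empty (Set.subset_inter hs ht) h.inter_eq)

theorem finrank_restrictSupport {k : Type*} [CommSemiring k] [StrongRankCondition k]
    (s : Set (σ →₀ ℕ)) : Module.finrank k (restrictSupport k s) = s.ncard :=
  Module.finrank_eq_nat_card_basis (basisRestrictSupport k s)

theorem finrank_map_mkQ_of_disjoint {k M : Type*} [Ring k] [AddCommGroup M] [Module k M]
    {E Q : Submodule k M} (h : Disjoint E Q) :
    Module.finrank k ((E ⊔ Q).map Q.mkQ) = Module.finrank k E := by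
  have hinj : Function.Injective (Q.mkQ.domRestrict E) :=
    LinearMap.injective_domRestrict_iff.2 (by rwa [Submodule.ker_mkQ])
  rw [Submodule.map_sup, Submodule.mkQ_map_self, sup_bot_eq, ← LinearMap.range_domRestrict,
    LinearMap.finrank_range_of_inj hinj]

theorem grDim_eq_ncard_of_disjoint [Finite σ] [DecidableEq σ] {f : MvPolynomial σ ℂ} {α : ℝ}
    (h : Disjoint (Nle f α) ((LIdeal f).restrictScalars ℂ)) :
    grDim f α = {v : σ → ℕ | nu f (natToR v) = α}.ncard := by
  set E := restrictSupport ℂ {m | nu f (toR m) = α}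
  have hsup : E ⊔ Nlt f α = Nle f α := by
    refine (restrictSupport_union _ _).symm.trans (congrArg _ (Set.ext fun m ↦ ?_))
    exact le_iff_eq_or_lt.symm
  have hdisj : Disjoint E (Nlt f α) :=
    disjoint_restrictSupport (Set.disjoint_left.2 fun _ heq hlt ↦ ne_of_lt hlt heq)
  rw [← hsup] at h
  calc grDim f α = Module.finrank ℂ E := by
        rw [grDim, grN, ← hsup, sup_assoc]
        exact finrank_map_mkQ_of_disjoint (hdisj.disjoint_sup_right_of_disjoint_sup_left h)
    _ = {m | nu f (toR m) = α}.ncard := finrank_restrictSupport _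
    _ = {v : σ → ℕ | nu f (natToR v) = α}.ncard :=
      Nat.card_congr (Finsupp.equivFunOnFinite.subtypeEquiv fun _ ↦ Iff.rfl)

end GradedDimension

end NewtonSpectrum

open ToricNewton NewtonSpectrum in
theorem toric_newton_spectrum_below_one_general {σ : Type*} [Finite σ] [DecidableEq σ]
    {f : MvPolynomial σ ℂ} (hconv : Convenient f) (hnd : Nondegenerate f) {α : ℝ} (hα : α < 1) :
    grDim f α = {v : σ → ℕ | nu f (natToR v) = α}.ncard :=
  grDim_eq_ncard_of_disjoint (disjoint_Nle_LIdeal hconv hnd hα)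

open ToricNewton in
/-- for `α < 1`, `dim gr^𝒩_α(ℬ/ℒ)` equals the number of lattice points
`v ∈ ℕⁿ` with `ν(v) = α`. -/
theorem toric_newton_spectrum_below_one {n : ℕ} (hn : 1 ≤ n) (f : MvPolynomial (Fin n) ℂ)
    (hconv : Convenient f) (hnd : Nondegenerate f) :
    ∀ α : ℚ, α < 1 →
      grDim f (α : ℝ) = {v : Fin n → ℕ | nu f (natToR v) = (α : ℝ)}.ncard :=
  fun _ hα ↦ toric_newton_spectrum_below_one_general hconv hnd (by exact_mod_cast hα)
end
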